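/- Let N, n be positive integers and let A and B be disjoint sets of n points each in the integer grid {0,…,N}² ⊆ ℝ², with no three points of A ∪ B collinear. Let ℓ be a nonnegative integer with 2^ℓ ≥ 8nN⁴. For a ∈ A and b ∈ B define W_ℓ(a, b) = (2nN² + 1)·⌊2^ℓ · ‖a − b‖⌋ + (b₂ − a₂)(b₁ + a₁), where a = (a₁, a₂) and b = (b₁, b₂). Then the minimum of Σ_{a∈A} W_ℓ(a, M(a)) over all bijections M : A → B is attained by a unique bijection. -/

import Mathlib

/-!
Let `M` and `M'` be minimum-weight matchings. By Birkhoff's theorem no exchange of the endpoints of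
an edge of `M` and an edge of `M'` lowers the weight (`exchange_le`), even if these edges belong to
different matchings. If two edges crossed, the exchange would shorten them by at least `1 / (6 N³)`
(`crossing_gap`): the crossing point has barycentric coordinates with denominator the cross product
of the two edges, which is a nonzero integer, and the triangle-inequality defect is controlled by
the area. As `2 ^ ℓ ≥ 8nN⁴`, the rounded lengths would drop, which outweighs the area term
(`Wl_exchange_lt`). Hence the union of `M` and `M'` is drawn without crossings
(`segmentsDisjoint_of_minimal`).

Suppose `M ≠ M'`. The symmetric difference is a disjoint union of cycles in the plane. Direct an
edge upwards if an even number of edges lie to its left, and downwards otherwise. A sweep by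
horizontal lines shows that these directions are consistent along each cycle, and since the directed
crossings of every horizontal line alternate, the total signed area of the directed cycles is
negative (`CycleDrawing.area_neg`). Let `P` consist of the common edges and the edges directed from
`A` to `B`, and `Q` of the common edges and the edges directed from `B` to `A`. These are matchings
which together have the edges of `M` and `M'`, so they have minimum weight too, and their total
signed areas differ (`exists_switch`). However, up to a sum over the endpoints, the area term
`W_TV` of a matching is a sum of cross products, of absolute value at most `N²` each. As
`P` and `Q` have the same weight and `2nN² + 1` exceeds the possible difference of these sums, both
the rounded lengths and the area terms of `P` and `Q` agree, a contradiction.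

The sweep needs vertices at different heights, which the shear `(x, y) ↦ (x, (N + 1) y + x + 1)`
provides; it multiplies areas by `N + 1`.
-/

open scoped BigOperators

attribute [local instance] Classical.propDecidable

/-- `p` is a point of the integer grid `{0,…,N}² ⊆ ℝ²`. -/
def OnGrid (N : ℕ) (p : EuclideanSpace ℝ (Fin 2)) : Prop :=
  ∀ i : Fin 2, ∃ m : ℕ, m ≤ N ∧ p i = (m : ℝ)

/-- The combined weight function
`W_ℓ(a, b) = (2nN² + 1)·⌊2^ℓ·‖a - b‖⌋ + (b₂ - a₂)(b₁ + a₁)`. -/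
noncomputable def Wl (n N l : ℕ) (a b : EuclideanSpace ℝ (Fin 2)) : ℝ :=
  (2 * n * N ^ 2 + 1 : ℝ) * (⌊(2 : ℝ) ^ l * ‖a - b‖⌋ : ℤ) + (b 1 - a 1) * (b 0 + a 0)

/-- The `W_ℓ`-weight of a perfect matching (bijection) `M` between `A` and `B`. -/
noncomputable def WlWeight (n N l : ℕ) (A B : Finset (EuclideanSpace ℝ (Fin 2)))
    (M : {x // x ∈ A} → {y // y ∈ B}) : ℝ :=
  ∑ a : {x // x ∈ A},
    Wl n N l (a : EuclideanSpace ℝ (Fin 2)) (M a : EuclideanSpace ℝ (Fin 2))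

/-! ### An exchange inequality for minimum-weight assignments -/

/-- If an edge `a₁ → M a₁` of one minimum-weight bijection and an edge `a₂ → M' a₂` of another are
replaced by the two edges with exchanged endpoints, the weight does not drop. The half-sum of the
two permutation matrices, modified in this way, is doubly stochastic, hence by Birkhoff's theorem
a convex combination of permutation matrices, so its weight is at least the minimum. -/
lemma exchange_le {α β : Type*} [Fintype α] (w : α → β → ℝ) (M M' : α ≃ β)
    (hM : ∀ σ : α ≃ β, ∑ a, w a (M a) ≤ ∑ a, w a (σ a))
    (hM' : ∀ σ : α ≃ β, ∑ a, w a (M' a) ≤ ∑ a, w a (σ a))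
    {a₁ a₂ : α} (hne : a₁ ≠ a₂) :
    w a₁ (M a₁) + w a₂ (M' a₂) ≤ w a₁ (M' a₂) + w a₂ (M a₁) := by
  set τ : Equiv.Perm α := M'.trans M.symm with hτ
  have hMτ : ∀ a, M (τ a) = M' a := fun a => by simp [hτ]
  let φ : Matrix α α ℝ → ℝ := fun X => ∑ i, ∑ j, w i (M j) * X i j
  have hφperm : ∀ σ : Equiv.Perm α, φ (σ.permMatrix ℝ) = ∑ i, w i (M (σ i)) := by
    intro σ
    simp [φ, Equiv.Perm.permMatrix, PEquiv.toMatrix_apply]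
  have hφadd : ∀ X Y, φ (X + Y) = φ X + φ Y := by
    intro X Y
    simp [φ, mul_add, Finset.sum_add_distrib]
  have hφsub : ∀ X Y, φ (X - Y) = φ X - φ Y := by
    intro X Y
    simp [φ, mul_sub, Finset.sum_sub_distrib]
  have hφsmul : ∀ (c : ℝ) X, φ (c • X) = c * φ X := by
    intro c X
    simp [φ, Finset.mul_sum, mul_left_comm]
  have hφsum : ∀ (c : Equiv.Perm α → ℝ),
      φ (∑ σ, c σ • σ.permMatrix ℝ) = ∑ σ, c σ * φ (σ.permMatrix ℝ) := by
    intro c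
    let φl : Matrix α α ℝ →ₗ[ℝ] ℝ :=
      { toFun := φ, map_add' := hφadd, map_smul' := hφsmul }
    change φl _ = ∑ σ, c σ * φl _
    rw [map_sum]
    simp
  have hφsingle : ∀ i j, φ (Matrix.single i j 1) = w i (M j) := by
    intro i j
    simp only [φ, Matrix.single_apply]
    rw [Finset.sum_eq_single i, Finset.sum_eq_single j]
    · simp
    · intro b _ hb; simp [hb.symm]
    · simp
    · intro b _ hb; simp [hb.symm]
    · simp
  set X : Matrix α α ℝ := (1 / 2 : ℝ) • ((1 : Equiv.Perm α).permMatrix ℝ + τ.permMatrix ℝ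
    + Matrix.single a₁ (τ a₂) 1 + Matrix.single a₂ a₁ 1
    - Matrix.single a₁ a₁ 1 - Matrix.single a₂ (τ a₂) 1) with hX
  have hXds : X ∈ doublyStochastic ℝ α := by
    rw [mem_doublyStochastic_iff_sum]
    refine ⟨?_, ?_, ?_⟩
    · intro i j
      simp only [hX, Matrix.smul_apply, Matrix.sub_apply, Matrix.add_apply, Matrix.single_apply,
        Equiv.Perm.permMatrix, PEquiv.toMatrix_apply, smul_eq_mul]
      simp only [Equiv.toPEquiv_apply, Option.mem_some_iff, Equiv.Perm.coe_one, id]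
      by_cases h1 : a₁ = i
      · subst h1
        simp only [hne.symm, false_and, if_false, true_and]
        split_ifs <;> norm_num
      · simp only [h1, false_and, if_false]
        by_cases h2 : a₂ = i
        · subst h2
          simp only [true_and]
          split_ifs <;> norm_num
        · simp only [h2, false_and, if_false]
          split_ifs <;> norm_num
    · intro i
      simp only [hX, Matrix.smul_apply, Matrix.sub_apply, Matrix.add_apply, Matrix.single_apply,
        Equiv.Perm.permMatrix, PEquiv.toMatrix_apply, smul_eq_mul, ← Finset.mul_sum,
        Finset.sum_add_distrib, Finset.sum_sub_distrib]
      simp [ite_and]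
      ring
    · intro j
      simp only [hX, Matrix.smul_apply, Matrix.sub_apply, Matrix.add_apply, Matrix.single_apply,
        Equiv.Perm.permMatrix, PEquiv.toMatrix_apply, smul_eq_mul, ← Finset.mul_sum,
        Finset.sum_add_distrib, Finset.sum_sub_distrib]
      have : ∑ x, (if τ x = j then (1 : ℝ) else 0) = 1 := by
        rw [Finset.sum_eq_single (τ.symm j)]
        · simp
        · intro b _ hb
          rw [if_neg]
          rintro rfl
          simp at hb
        · simp
      simp [ite_and, this]
      norm_num
  obtain ⟨c, hc0, hc1, hcX⟩ := exists_eq_sum_perm_of_mem_doublyStochastic hXds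
  have h1 : ∑ a, w a (M a) ≤ φ X := by
    rw [← hcX, hφsum]
    calc ∑ a, w a (M a) = ∑ σ, c σ * ∑ a, w a (M a) := by
          rw [← Finset.sum_mul, hc1, one_mul]
      _ ≤ _ := by
          refine Finset.sum_le_sum fun σ _ => mul_le_mul_of_nonneg_left ?_ (hc0 σ)
          rw [hφperm]
          exact hM (σ.trans M)
  have h2 : ∑ a, w a (M' a) = ∑ a, w a (M a) := le_antisymm (hM' M) (hM M')
  rw [hX, hφsmul, hφsub, hφsub, hφadd, hφadd, hφadd, hφperm, hφperm, hφsingle, hφsingle,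
    hφsingle, hφsingle] at h1
  simp only [hMτ, Equiv.Perm.coe_one, id] at h1
  linarith

/-! ### Alternating sums of finitely many distinct reals -/

/-- An even number of distinct reals, listed in increasing order with signs `+ - + - …`, has
nonpositive signed sum, and negative sum if there are any: cancel the two largest and induct. -/
lemma alternating_sum_neg {E : Type*} (x : E → ℝ) :
    ∀ (r : ℕ) (S : Finset E), S.card = 2 * r → Set.InjOn x S →
      (∑ e ∈ S, (-1 : ℝ) ^ (S.filter fun g => x g < x e).card * x e ≤ 0) ∧
      (S.Nonempty → ∑ e ∈ S, (-1 : ℝ) ^ (S.filter fun g => x g < x e).card * x e < 0) := by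
  intro r
  induction r with
  | zero =>
    intro S hS _
    have : S = ∅ := by simpa using hS
    subst this
    simp
  | succ r ih =>
    intro S hS hinj
    have hne : S.Nonempty := by rw [← Finset.card_pos]; omega
    obtain ⟨i, hi, hmax⟩ := S.exists_max_image x hne
    have hcard1 : (S.erase i).card = 2 * r + 1 := by rw [Finset.card_erase_of_mem hi]; omega
    have hne1 : (S.erase i).Nonempty := by rw [← Finset.card_pos]; omega
    obtain ⟨j, hj, hmaxj⟩ := (S.erase i).exists_max_image x hne1
    have hcard2 : ((S.erase i).erase j).card = 2 * r := by
      rw [Finset.card_erase_of_mem hj]; omega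
    have hjS : j ∈ S := Finset.mem_of_mem_erase hj
    have hji : j ≠ i := Finset.ne_of_mem_erase hj
    have hlt : x j < x i :=
      lt_of_le_of_ne (hmax j hjS) fun h => hji (hinj hjS hi h)
    have hfi : S.filter (fun g => x g < x i) = S.erase i := by
      ext g
      simp only [Finset.mem_filter, Finset.mem_erase]
      constructor
      · rintro ⟨h1, h2⟩
        exact ⟨by rintro rfl; exact lt_irrefl _ h2, h1⟩
      · rintro ⟨h1, h2⟩
        exact ⟨h2, lt_of_le_of_ne (hmax g h2) fun h => h1 (hinj h2 hi h)⟩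
    have hfj : S.filter (fun g => x g < x j) = (S.erase i).erase j := by
      ext g
      simp only [Finset.mem_filter, Finset.mem_erase]
      constructor
      · rintro ⟨h1, h2⟩
        refine ⟨by rintro rfl; exact lt_irrefl _ h2, ?_, h1⟩
        rintro rfl
        exact lt_asymm h2 hlt
      · rintro ⟨h1, h2, h3⟩
        exact ⟨h3, lt_of_le_of_ne (hmaxj g (Finset.mem_erase.2 ⟨h2, h3⟩))
          fun h => h1 (hinj h3 hjS h)⟩
    have hrest : ∑ e ∈ (S.erase i).erase j, (-1 : ℝ) ^ (S.filter fun g => x g < x e).card * x e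
        = ∑ e ∈ (S.erase i).erase j,
          (-1 : ℝ) ^ (((S.erase i).erase j).filter fun g => x g < x e).card * x e := by
      refine Finset.sum_congr rfl fun e he => ?_
      have he1 : e ∈ S.erase i := Finset.mem_of_mem_erase he
      have he2 : e ∈ S := Finset.mem_of_mem_erase he1
      have : S.filter (fun g => x g < x e)
          = ((S.erase i).erase j).filter (fun g => x g < x e) := by
        ext g
        simp only [Finset.mem_filter, Finset.mem_erase]
        constructor
        · rintro ⟨h1, h2⟩
          refine ⟨⟨?_, ?_, h1⟩, h2⟩
          · rintro rfl
            exact absurd (hmaxj e he1) (not_le.2 h2)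
          · rintro rfl
            exact absurd (hmax e he2) (not_le.2 h2)
        · rintro ⟨⟨_, _, h1⟩, h2⟩
          exact ⟨h1, h2⟩
      rw [this]
    have key : ∑ e ∈ S, (-1 : ℝ) ^ (S.filter fun g => x g < x e).card * x e < 0 := by
      rw [← Finset.add_sum_erase _ _ hi, ← Finset.add_sum_erase _ _ hj, hrest, hfi, hfj, hcard1,
        hcard2]
      have := (ih _ hcard2 (hinj.mono fun e he =>
        Finset.mem_of_mem_erase (Finset.mem_of_mem_erase he))).1
      rw [pow_succ, pow_mul]
      norm_num
      linarith
    exact ⟨key.le, fun _ => key⟩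

/-! ### Sweeping a planar straight-line drawing of a disjoint union of cycles -/

/-- The abscissa at height `t` of the line through `(x₀, y₀)` and `(x₁, y₁)`. -/
noncomputable def lineX (x₀ y₀ x₁ y₁ t : ℝ) : ℝ := x₀ + (t - y₀) / (y₁ - y₀) * (x₁ - x₀)

/-- A crossing-free straight-line drawing of a graph whose nonisolated vertices have degree two.
Vertices lie at pairwise different positive integer heights `Y`, so every edge has a lower
endpoint `lo` and an upper endpoint `hi`; two distinct edges may only meet in a common vertex. -/
structure CycleDrawing (E V : Type*) [Fintype E] where
  X : V → ℝ
  Y : V → ℕ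
  lo : E → V
  hi : E → V
  Y_pos : ∀ v, 0 < Y v
  Y_inj : Function.Injective Y
  lo_lt_hi : ∀ e, Y (lo e) < Y (hi e)
  deg : ∀ v, (Finset.univ.filter fun e => lo e = v ∨ hi e = v).card = 0 ∨
    (Finset.univ.filter fun e => lo e = v ∨ hi e = v).card = 2
  planar : ∀ e g, e ≠ g → ∀ t : ℝ, (Y (lo e) : ℝ) ≤ t → t ≤ Y (hi e) → (Y (lo g) : ℝ) ≤ t →
    t ≤ Y (hi g) →
    lineX (X (lo e)) (Y (lo e)) (X (hi e)) (Y (hi e)) t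
      = lineX (X (lo g)) (Y (lo g)) (X (hi g)) (Y (hi g)) t →
    ∃ v, (lo e = v ∨ hi e = v) ∧ (lo g = v ∨ hi g = v) ∧ (Y v : ℝ) = t

namespace CycleDrawing

variable {E V : Type*} [Fintype E] (D : CycleDrawing E V)

/-- The abscissa of the edge `e` at height `t`. -/
noncomputable def pos (e : E) (t : ℝ) : ℝ :=
  lineX (D.X (D.lo e)) (D.Y (D.lo e)) (D.X (D.hi e)) (D.Y (D.hi e)) t

/-- The edge `e` crosses the horizontal slab between the heights `k` and `k + 1`. -/
def Spans (e : E) (k : ℕ) : Prop := D.Y (D.lo e) ≤ k ∧ k + 1 ≤ D.Y (D.hi e)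

/-- The number of edges to the left of `e` on the middle line of the slab at height `k`. -/
noncomputable def leftCount (e : E) (k : ℕ) : ℕ :=
  (Finset.univ.filter fun g => D.Spans g k ∧ D.pos g (k + 1 / 2) < D.pos e (k + 1 / 2)).card

lemma lo_lt_hi_real (e : E) : (D.Y (D.lo e) : ℝ) < D.Y (D.hi e) := by
  exact_mod_cast D.lo_lt_hi e

lemma pos_lo (e : E) : D.pos e (D.Y (D.lo e)) = D.X (D.lo e) := by
  simp [pos, lineX]

lemma pos_hi (e : E) : D.pos e (D.Y (D.hi e)) = D.X (D.hi e) := by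
  have := D.lo_lt_hi_real e
  have h : (D.Y (D.hi e) : ℝ) - D.Y (D.lo e) ≠ 0 := by linarith
  simp [pos, lineX, div_self h]

lemma pos_of_inc {e : E} {v : V} (h : D.lo e = v ∨ D.hi e = v) : D.pos e (D.Y v) = D.X v := by
  rcases h with rfl | rfl
  · exact D.pos_lo e
  · exact D.pos_hi e

lemma pos_affine (e : E) (c t₁ t₂ : ℝ) :
    D.pos e (t₁ + c * (t₂ - t₁)) = D.pos e t₁ + c * (D.pos e t₂ - D.pos e t₁) := by
  simp only [pos, lineX]
  ring

lemma Spans.le_left {D : CycleDrawing E V} {e : E} {k : ℕ} (h : D.Spans e k) {t : ℝ}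
    (ht : (k : ℝ) ≤ t) : (D.Y (D.lo e) : ℝ) ≤ t :=
  le_trans (by exact_mod_cast h.1) ht

lemma Spans.le_right {D : CycleDrawing E V} {e : E} {k : ℕ} (h : D.Spans e k) {t : ℝ}
    (ht : t ≤ k + 1) : t ≤ D.Y (D.hi e) :=
  ht.trans (by exact_mod_cast h.2)

/-- Two edges cannot change sides between two heights at which both are present. -/
lemma pos_le_of_pos_lt {e g : E} (hne : e ≠ g) {t₁ t₂ : ℝ}
    (e1 : (D.Y (D.lo e) : ℝ) ≤ t₁) (e1' : t₁ ≤ D.Y (D.hi e))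
    (e2 : (D.Y (D.lo e) : ℝ) ≤ t₂) (e2' : t₂ ≤ D.Y (D.hi e))
    (g1 : (D.Y (D.lo g) : ℝ) ≤ t₁) (g1' : t₁ ≤ D.Y (D.hi g))
    (g2 : (D.Y (D.lo g) : ℝ) ≤ t₂) (g2' : t₂ ≤ D.Y (D.hi g))
    (h : D.pos g t₁ < D.pos e t₁) : D.pos g t₂ ≤ D.pos e t₂ := by
  by_contra! hcon
  set δ₁ := D.pos e t₁ - D.pos g t₁ with hδ₁
  set δ₂ := D.pos g t₂ - D.pos e t₂ with hδ₂
  have p1 : 0 < δ₁ := by linarith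
  have p2 : 0 < δ₂ := by linarith
  have hs : 0 < δ₁ + δ₂ := by linarith
  -- the height at which the two affine functions agree
  set c := δ₁ / (δ₁ + δ₂) with hc
  have c0 : 0 < c := by positivity
  have c1 : c < 1 := by rw [hc, div_lt_one hs]; linarith
  have hceq : c * (δ₁ + δ₂) = δ₁ := by rw [hc]; field_simp
  have ht : t₁ ≠ t₂ := by rintro rfl; linarith
  have hconv : ∀ lo hi : ℝ, lo ≤ t₁ → t₁ ≤ hi → lo ≤ t₂ → t₂ ≤ hi →
      lo < t₁ + c * (t₂ - t₁) ∧ t₁ + c * (t₂ - t₁) < hi := by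
    intro lo hi h1 h2 h3 h4
    rcases lt_or_gt_of_ne ht with hlt | hlt
    · constructor <;> nlinarith
    · constructor <;> nlinarith
  obtain ⟨ea, eb⟩ := hconv _ _ e1 e1' e2 e2'
  obtain ⟨ga, gb⟩ := hconv _ _ g1 g1' g2 g2'
  have heq : D.pos e (t₁ + c * (t₂ - t₁)) = D.pos g (t₁ + c * (t₂ - t₁)) := by
    rw [pos_affine, pos_affine]
    have : D.pos e t₂ - D.pos e t₁ - (D.pos g t₂ - D.pos g t₁) = -(δ₁ + δ₂) := by
      rw [hδ₁, hδ₂]; ring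
    linear_combination c * this - hceq + hδ₁
  obtain ⟨v, hv, -, hY⟩ := D.planar e g hne _ ea.le eb.le ga.le gb.le heq
  rcases hv with rfl | rfl <;> linarith

lemma pos_mid_ne {e g : E} (hne : e ≠ g) {k : ℕ} (he : D.Spans e k) (hg : D.Spans g k) :
    D.pos e (k + 1 / 2) ≠ D.pos g (k + 1 / 2) := by
  intro h
  obtain ⟨v, -, -, hY⟩ := D.planar e g hne (k + 1 / 2) (he.le_left (by linarith))
    (he.le_right (by linarith)) (hg.le_left (by linarith)) (hg.le_right (by linarith)) h
  have : (2 * D.Y v : ℝ) = 2 * k + 1 := by linarith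
  have : 2 * D.Y v = 2 * k + 1 := by exact_mod_cast this
  omega

lemma mid_lt_iff {e g : E} (hne : e ≠ g) {k : ℕ} (he : D.Spans e k) (hg : D.Spans g k) {t : ℝ}
    (h1 : (k : ℝ) ≤ t) (h2 : t ≤ k + 1) (ht : D.pos g t ≠ D.pos e t) :
    D.pos g (k + 1 / 2) < D.pos e (k + 1 / 2) ↔ D.pos g t < D.pos e t := by
  have a1 : (k : ℝ) ≤ k + 1 / 2 := by linarith
  have a2 : (k : ℝ) + 1 / 2 ≤ k + 1 := by linarith
  constructor
  · intro h
    exact lt_of_le_of_ne (D.pos_le_of_pos_lt hne (he.le_left a1) (he.le_right a2) (he.le_left h1)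
      (he.le_right h2) (hg.le_left a1) (hg.le_right a2) (hg.le_left h1) (hg.le_right h2) h) ht
  · intro h
    exact lt_of_le_of_ne (D.pos_le_of_pos_lt hne (he.le_left h1) (he.le_right h2) (he.le_left a1)
      (he.le_right a2) (hg.le_left h1) (hg.le_right h2) (hg.le_left a1) (hg.le_right a2) h)
      (D.pos_mid_ne hne he hg).symm

/-- The number of edges left of `e` in a slab, read off at a boundary line `t` of the slab; edges
meeting `e` on that line form the second summand. -/
lemma leftCount_eq {e : E} {k : ℕ} (he : D.Spans e k) {t : ℝ} (h1 : (k : ℝ) ≤ t)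
    (h2 : t ≤ k + 1) :
    D.leftCount e k = (Finset.univ.filter fun g => D.Spans g k ∧ D.pos g t < D.pos e t).card
      + (Finset.univ.filter fun g => D.Spans g k ∧ D.pos g t = D.pos e t ∧
          D.pos g (k + 1 / 2) < D.pos e (k + 1 / 2)).card := by
  rw [leftCount, ← Finset.card_union_of_disjoint]
  · congr 1
    ext g
    simp only [Finset.mem_filter, Finset.mem_univ, true_and, Finset.mem_union]
    by_cases hg : D.Spans g k
    · by_cases heq : D.pos g t = D.pos e t
      · simp [hg, heq]
      · have hne : e ≠ g := by rintro rfl; exact heq rfl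
        have := D.mid_lt_iff hne he hg h1 h2 heq
        simp only [hg, heq, true_and, false_and, or_false, this]
    · simp [hg]
  · rw [Finset.disjoint_left]
    intro g hg hg'
    simp only [Finset.mem_filter, Finset.mem_univ, true_and] at hg hg'
    linarith [hg.2, hg'.2.1]

lemma exists_common_vertex {e g : E} (hne : e ≠ g) {k m : ℕ} (he : D.Spans e k)
    (hg : D.Spans g k) (h1 : k ≤ m) (h2 : m ≤ k + 1) (h : D.pos g m = D.pos e m) :
    ∃ v, (D.lo e = v ∨ D.hi e = v) ∧ (D.lo g = v ∨ D.hi g = v) ∧ D.Y v = m := by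
  have h1' : (k : ℝ) ≤ m := by exact_mod_cast h1
  have h2' : (m : ℝ) ≤ k + 1 := by exact_mod_cast h2
  obtain ⟨v, a, b, c⟩ := D.planar e g hne m (he.le_left h1') (he.le_right h2')
    (hg.le_left h1') (hg.le_right h2') h.symm
  exact ⟨v, a, b, by exact_mod_cast c⟩

/-- When the sweep line passes the height `k + 1`, the number of edges with a property of the
abscissa at that height keeps its parity: an even number of edges ends or starts there, all at
the same abscissa. -/
lemma card_parity (P : ℝ → Prop) (k : ℕ) :
    Even ((Finset.univ.filter fun g => D.Spans g (k + 1) ∧ P (D.pos g (k + 1 : ℕ))).card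
      + (Finset.univ.filter fun g => D.Spans g k ∧ P (D.pos g (k + 1 : ℕ))).card) := by
  set pass := Finset.univ.filter fun g => D.Y (D.lo g) ≤ k ∧ k + 2 ≤ D.Y (D.hi g) ∧
    P (D.pos g (k + 1 : ℕ)) with hpass
  set up := Finset.univ.filter fun g => D.Y (D.lo g) = k + 1 ∧ P (D.pos g (k + 1 : ℕ)) with hup
  set down := Finset.univ.filter fun g => D.Y (D.hi g) = k + 1 ∧ P (D.pos g (k + 1 : ℕ))
    with hdown
  have hU : (Finset.univ.filter fun g => D.Spans g (k + 1) ∧ P (D.pos g (k + 1 : ℕ))).card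
      = pass.card + up.card := by
    rw [← Finset.card_union_of_disjoint]
    · congr 1
      ext g
      have := D.lo_lt_hi g
      simp only [hpass, hup, Finset.mem_filter, Finset.mem_univ, true_and, Finset.mem_union]
      unfold Spans
      by_cases hP : P (D.pos g (k + 1 : ℕ))
      · simp only [hP, and_true]; omega
      · simp only [hP, and_false, or_false]
    · rw [Finset.disjoint_left]
      intro g hg hg'
      simp only [hpass, hup, Finset.mem_filter, Finset.mem_univ, true_and] at hg hg'
      omega
  have hL : (Finset.univ.filter fun g => D.Spans g k ∧ P (D.pos g (k + 1 : ℕ))).card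
      = pass.card + down.card := by
    rw [← Finset.card_union_of_disjoint]
    · congr 1
      ext g
      have := D.lo_lt_hi g
      simp only [hpass, hdown, Finset.mem_filter, Finset.mem_univ, true_and, Finset.mem_union]
      unfold Spans
      by_cases hP : P (D.pos g (k + 1 : ℕ))
      · simp only [hP, and_true]; omega
      · simp only [hP, and_false, or_false]
    · rw [Finset.disjoint_left]
      intro g hg hg'
      simp only [hpass, hdown, Finset.mem_filter, Finset.mem_univ, true_and] at hg hg'
      omega
  have hev : Even (up.card + down.card) := by
    rw [← Finset.card_union_of_disjoint]
    · by_cases hv : ∃ v, D.Y v = k + 1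
      · obtain ⟨v, hv⟩ := hv
        have hY : ∀ u, D.Y u = k + 1 ↔ u = v := fun u =>
          ⟨fun h => D.Y_inj (h.trans hv.symm), fun h => h ▸ hv⟩
        by_cases hP : P (D.X v)
        · have : up ∪ down = Finset.univ.filter fun e => D.lo e = v ∨ D.hi e = v := by
            ext g
            simp only [hup, hdown, Finset.mem_filter, Finset.mem_univ, true_and,
              Finset.mem_union, hY]
            rw [← or_and_right]
            constructor
            · exact fun h => h.1
            · intro h
              refine ⟨h, ?_⟩
              rw [← hv, D.pos_of_inc h]
              exact hP
          rw [this]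
          rcases D.deg v with h | h <;> rw [h] <;> decide
        · have : up ∪ down = ∅ := by
            ext g
            simp only [hup, hdown, Finset.mem_filter, Finset.mem_univ, true_and,
              Finset.mem_union, hY, Finset.notMem_empty, iff_false]
            rw [← or_and_right]
            rintro ⟨h, h'⟩
            rw [← hv, D.pos_of_inc h] at h'
            exact hP h'
          rw [this]
          simp
      · have : up ∪ down = ∅ := by
          ext g
          simp only [hup, hdown, Finset.mem_filter, Finset.mem_univ, true_and,
            Finset.mem_union, Finset.notMem_empty, iff_false]
          rintro (⟨h, -⟩ | ⟨h, -⟩) <;> exact hv ⟨_, h⟩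
        rw [this]
        simp
    · rw [Finset.disjoint_left]
      intro g hg hg'
      have := D.lo_lt_hi g
      simp only [hup, hdown, Finset.mem_filter, Finset.mem_univ, true_and] at hg hg'
      omega
  rw [hU, hL]
  rw [Nat.even_iff] at hev ⊢
  omega

lemma even_card_spans (k : ℕ) : Even (Finset.univ.filter fun g => D.Spans g k).card := by
  induction k with
  | zero =>
    have : (Finset.univ.filter fun g => D.Spans g 0) = ∅ := by
      ext g
      have := D.Y_pos (D.lo g)
      simp only [Finset.mem_filter, Finset.mem_univ, true_and, Finset.notMem_empty, iff_false]
      unfold Spans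
      omega
    rw [this]
    simp
  | succ k ih =>
    have := D.card_parity (fun _ => True) k
    simp only [and_true] at this
    rw [Nat.even_iff] at *
    omega

lemma even_leftCount_succ {e : E} {k : ℕ} (h0 : D.Spans e k) (h1 : D.Spans e (k + 1)) :
    Even (D.leftCount e (k + 1) + D.leftCount e k) := by
  have hk : ((k + 1 : ℕ) : ℝ) = k + 1 := by push_cast; ring
  have key : ∀ j, D.Spans e j → j ≤ k + 1 → k + 1 ≤ j + 1 → D.leftCount e j =
      (Finset.univ.filter fun g => D.Spans g j ∧
        D.pos g (k + 1 : ℕ) < D.pos e (k + 1 : ℕ)).card := by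
    intro j hj a b
    rw [D.leftCount_eq hj (t := (k + 1 : ℕ)) (by exact_mod_cast a) (by exact_mod_cast b)]
    rw [Nat.add_eq_left, Finset.card_eq_zero, Finset.filter_eq_empty_iff]
    rintro g - ⟨hg, heq, hlt⟩
    have hne : e ≠ g := by rintro rfl; exact lt_irrefl _ hlt
    obtain ⟨v, hv, -, hY⟩ := D.exists_common_vertex hne hj hg a b heq
    unfold Spans at h0 h1
    rcases hv with rfl | rfl <;> omega
  rw [key k h0 (by omega) (by omega), key (k + 1) h1 (by omega) (by omega)]
  exact D.card_parity (fun x => x < D.pos e (k + 1 : ℕ)) k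

lemma eq_or_eq_of_inc {v : V} {e f g : E} (hef : e ≠ f) (he : D.lo e = v ∨ D.hi e = v)
    (hf : D.lo f = v ∨ D.hi f = v) (hg : D.lo g = v ∨ D.hi g = v) : g = e ∨ g = f := by
  by_contra! hcon
  have hsub : ({e, f, g} : Finset E) ⊆ Finset.univ.filter fun e => D.lo e = v ∨ D.hi e = v := by
    intro x hx
    simp only [Finset.mem_insert, Finset.mem_singleton] at hx
    rcases hx with rfl | rfl | rfl <;> simpa
  have h3 : ({e, f, g} : Finset E).card = 3 :=
    Finset.card_eq_three.2 ⟨e, f, g, hef, hcon.1.symm, hcon.2.symm, rfl⟩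
  have := Finset.card_le_card hsub
  rcases D.deg v with h | h <;> omega

/-- Two edges on the same side of their common vertex are neighbours in the left-to-right order,
so their left counts have different parity. -/
lemma odd_leftCount_add {v : V} {e f : E} (hef : e ≠ f) (he : D.lo e = v ∨ D.hi e = v)
    (hf : D.lo f = v ∨ D.hi f = v) {k : ℕ} (hek : D.Spans e k) (hfk : D.Spans f k)
    (h1 : k ≤ D.Y v) (h2 : D.Y v ≤ k + 1) : Odd (D.leftCount e k + D.leftCount f k) := by
  wlog hlt : D.pos e (k + 1 / 2) < D.pos f (k + 1 / 2) generalizing e f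
  · rw [add_comm]
    exact this hef.symm hf he hfk hek
      (lt_of_le_of_ne (not_lt.1 hlt) (D.pos_mid_ne hef.symm hfk hek))
  have h1' : (k : ℝ) ≤ D.Y v := by exact_mod_cast h1
  have h2' : (D.Y v : ℝ) ≤ k + 1 := by exact_mod_cast h2
  have hu : ∀ {g a : E}, (D.lo a = v ∨ D.hi a = v) → D.Spans a k → D.Spans g k → g ≠ a →
      D.pos g (D.Y v) = D.pos a (D.Y v) → g = e ∨ g = f := by
    intro g a ha hak hgk hga heq
    obtain ⟨u, -, hu, hY⟩ := D.exists_common_vertex hga.symm hak hgk h1 h2 heq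
    obtain rfl := D.Y_inj hY
    exact D.eq_or_eq_of_inc hef he hf hu
  rw [D.leftCount_eq hek h1' h2', D.leftCount_eq hfk h1' h2', D.pos_of_inc he, D.pos_of_inc hf]
  have t1 : (Finset.univ.filter fun g => D.Spans g k ∧ D.pos g (D.Y v) = D.X v ∧
      D.pos g (k + 1 / 2) < D.pos e (k + 1 / 2)) = ∅ := by
    rw [Finset.filter_eq_empty_iff]
    rintro g - ⟨hg, heq, hl⟩
    have hne : g ≠ e := by rintro rfl; exact lt_irrefl _ hl
    rw [← D.pos_of_inc he] at heq
    rcases hu he hek hg hne heq with rfl | rfl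
    · exact hne rfl
    · exact lt_asymm hl hlt
  have t2 : (Finset.univ.filter fun g => D.Spans g k ∧ D.pos g (D.Y v) = D.X v ∧
      D.pos g (k + 1 / 2) < D.pos f (k + 1 / 2)) = {e} := by
    ext g
    simp only [Finset.mem_filter, Finset.mem_univ, true_and, Finset.mem_singleton]
    constructor
    · rintro ⟨hg, heq, hl⟩
      have hne : g ≠ f := by rintro rfl; exact lt_irrefl _ hl
      rw [← D.pos_of_inc hf] at heq
      exact (hu hf hfk hg hne heq).resolve_right hne
    · rintro rfl
      exact ⟨hek, D.pos_of_inc he, hlt⟩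
  rw [t1, t2, Finset.card_empty, Finset.card_singleton]
  exact ⟨_, by ring⟩

/-- If the cycle passes upwards through `v`, from the lower edge `e` to the upper edge `f`, the
left counts next to `v` have the same parity. -/
lemma even_leftCount_add {v : V} {e f : E} (he : D.hi e = v) (hf : D.lo f = v) {k : ℕ}
    (hk : D.Y v = k + 1) : Even (D.leftCount f (k + 1) + D.leftCount e k) := by
  have hek : D.Spans e k := by
    have := D.lo_lt_hi e
    rw [he] at this
    exact ⟨by omega, by rw [he]; omega⟩
  have hfk : D.Spans f (k + 1) := by
    have := D.lo_lt_hi f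
    rw [hf] at this
    exact ⟨by rw [hf]; omega, by omega⟩
  have hef : e ≠ f := by
    rintro rfl
    have := D.lo_lt_hi e
    rw [he, hf] at this
    omega
  have pe : D.pos e (k + 1 : ℕ) = D.X v := by rw [← hk, D.pos_of_inc (Or.inr he)]
  have pf : D.pos f (k + 1 : ℕ) = D.X v := by rw [← hk, D.pos_of_inc (Or.inl hf)]
  rw [D.leftCount_eq hek (t := (k + 1 : ℕ)) (by push_cast; linarith) (by push_cast; linarith),
    D.leftCount_eq hfk (t := (k + 1 : ℕ)) le_rfl (by linarith), pe, pf]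
  have t1 : (Finset.univ.filter fun g => D.Spans g k ∧ D.pos g (k + 1 : ℕ) = D.X v ∧
      D.pos g (k + 1 / 2) < D.pos e (k + 1 / 2)) = ∅ := by
    rw [Finset.filter_eq_empty_iff]
    rintro g - ⟨hg, heq, hl⟩
    have hne : e ≠ g := by rintro rfl; exact lt_irrefl _ hl
    obtain ⟨u, -, hu, hY⟩ := D.exists_common_vertex (m := k + 1) hne hek hg (by omega) le_rfl
      (by rw [heq, pe])
    obtain rfl := D.Y_inj (hY.trans hk.symm)
    rcases D.eq_or_eq_of_inc hef (Or.inr he) (Or.inl hf) hu with rfl | rfl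
    · exact hne rfl
    · have := hg.1
      rw [hf] at this
      omega
  have t2 : (Finset.univ.filter fun g => D.Spans g (k + 1) ∧ D.pos g (k + 1 : ℕ) = D.X v ∧
      D.pos g ((k + 1 : ℕ) + 1 / 2) < D.pos f ((k + 1 : ℕ) + 1 / 2)) = ∅ := by
    rw [Finset.filter_eq_empty_iff]
    rintro g - ⟨hg, heq, hl⟩
    have hne : f ≠ g := by rintro rfl; exact lt_irrefl _ hl
    obtain ⟨u, -, hu, hY⟩ := D.exists_common_vertex (m := k + 1) hne hfk hg le_rfl (by omega)
      (by rw [heq, pf])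
    obtain rfl := D.Y_inj (hY.trans hk.symm)
    rcases D.eq_or_eq_of_inc hef (Or.inr he) (Or.inl hf) hu with rfl | rfl
    · have := hg.2
      rw [he] at this
      omega
    · exact hne rfl
  rw [t1, t2, Finset.card_empty, add_zero, add_zero]
  exact D.card_parity (fun x => x < D.X v) k

/-- The direction given to the edge `e`: `1` (upwards) if an even number of edges lie to the left
of `e`, and `-1` (downwards) otherwise. The count is taken in the lowest slab that `e` crosses. -/
noncomputable def dir (e : E) : ℝ := (-1) ^ D.leftCount e (D.Y (D.lo e))

lemma dir_eq {e : E} {k : ℕ} (h : D.Spans e k) : (-1 : ℝ) ^ D.leftCount e k = D.dir e := by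
  obtain ⟨j, rfl⟩ := Nat.exists_eq_add_of_le h.1
  induction j with
  | zero => rfl
  | succ j ih =>
    have h0 : D.Spans e (D.Y (D.lo e) + j) := ⟨by omega, by have := h.2; omega⟩
    rw [← ih h0]
    have := D.even_leftCount_succ h0 h
    rw [Nat.even_add] at this
    rcases Nat.even_or_odd (D.leftCount e (D.Y (D.lo e) + j)) with hh | hh
    · rw [hh.neg_one_pow]
      exact (this.2 hh).neg_one_pow
    · rw [hh.neg_one_pow]
      exact (Nat.not_even_iff_odd.1 fun h' => Nat.not_even_iff_odd.2 hh (this.1 h')).neg_one_pow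

lemma dir_eq_one_or (e : E) : D.dir e = 1 ∨ D.dir e = -1 := neg_one_pow_eq_or ℝ _

lemma dir_through {e f : E} (h : D.hi e = D.lo f) : D.dir e = D.dir f := by
  have hlt := D.lo_lt_hi e
  obtain ⟨k, hk⟩ : ∃ k, D.Y (D.hi e) = k + 1 := ⟨D.Y (D.hi e) - 1, by omega⟩
  have hek : D.Spans e k := ⟨by omega, by omega⟩
  have hfk : D.Spans f (k + 1) := by
    have := D.lo_lt_hi f
    rw [← h] at this
    exact ⟨by rw [← h]; omega, by omega⟩
  have := D.even_leftCount_add (v := D.hi e) rfl h.symm hk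
  rw [← D.dir_eq hek, ← D.dir_eq hfk]
  have h2 := this.neg_one_pow (α := ℝ)
  rw [pow_add] at h2
  rcases neg_one_pow_eq_or ℝ (D.leftCount e k) with h' | h' <;> rw [h'] at h2 ⊢ <;> linarith

lemma dir_neg_of_same_side {e f : E} {k : ℕ} {v : V} (hef : e ≠ f)
    (he : D.lo e = v ∨ D.hi e = v) (hf : D.lo f = v ∨ D.hi f = v) (hek : D.Spans e k)
    (hfk : D.Spans f k) (h1 : k ≤ D.Y v) (h2 : D.Y v ≤ k + 1) : D.dir e = -D.dir f := by
  have h := (D.odd_leftCount_add hef he hf hek hfk h1 h2).neg_one_pow (α := ℝ)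
  rw [pow_add, D.dir_eq hek, D.dir_eq hfk] at h
  rcases D.dir_eq_one_or e with h' | h' <;> rw [h'] at h ⊢ <;> linarith

lemma dir_hi {e f : E} (hef : e ≠ f) (h : D.hi e = D.hi f) : D.dir e = -D.dir f := by
  have hlt := D.lo_lt_hi e
  have hlt' := D.lo_lt_hi f
  obtain ⟨k, hk⟩ : ∃ k, D.Y (D.hi e) = k + 1 := ⟨D.Y (D.hi e) - 1, by omega⟩
  rw [← h] at hlt'
  exact D.dir_neg_of_same_side (k := k) hef (Or.inr rfl) (Or.inr h.symm) ⟨by omega, by omega⟩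
    ⟨by omega, by rw [← h]; omega⟩ (by omega) (by omega)

lemma dir_lo {e f : E} (hef : e ≠ f) (h : D.lo e = D.lo f) : D.dir e = -D.dir f := by
  have hlt := D.lo_lt_hi e
  have hlt' := D.lo_lt_hi f
  rw [← h] at hlt'
  exact D.dir_neg_of_same_side (k := D.Y (D.lo e)) hef (Or.inl rfl) (Or.inl h.symm)
    ⟨le_rfl, by omega⟩ ⟨by rw [← h], by omega⟩ le_rfl (by omega)

/-- Midpoint rule: twice the signed area between an edge and the vertical axis, slab by slab. -/
lemma trapezoid (e : E) {K : ℕ} (hK : D.Y (D.hi e) ≤ K) :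
    ((D.Y (D.hi e) : ℝ) - D.Y (D.lo e)) * (D.X (D.hi e) + D.X (D.lo e))
      = 2 * ∑ k ∈ (Finset.range K).filter (fun k => D.Spans e k), D.pos e (k + 1 / 2) := by
  have hlt := D.lo_lt_hi e
  have hltr := D.lo_lt_hi_real e
  have hfil : (Finset.range K).filter (fun k => D.Spans e k)
      = Finset.Ico (D.Y (D.lo e)) (D.Y (D.hi e)) := by
    ext k
    simp only [Finset.mem_filter, Finset.mem_range, Finset.mem_Ico]
    unfold Spans
    omega
  rw [hfil]
  set p := D.Y (D.lo e)
  set q := D.Y (D.hi e)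
  set c : ℝ := (D.X (D.hi e) - D.X (D.lo e)) / ((q : ℝ) - p) with hc
  have hcm : c * ((q : ℝ) - p) = D.X (D.hi e) - D.X (D.lo e) := by
    rw [hc]
    have : (q : ℝ) - p ≠ 0 := by linarith
    field_simp
  have hpos : ∀ t : ℝ, D.pos e t = D.X (D.lo e) + c * (t - p) := by
    intro t
    simp only [pos, lineX, hc]
    ring
  let F : ℕ → ℝ := fun k => D.X (D.lo e) * k + c * ((k : ℝ) ^ 2 / 2 - p * k)
  have htel : ∑ k ∈ Finset.Ico p q, D.pos e (k + 1 / 2) = F q - F p := by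
    rw [← Finset.sum_Ico_sub F hlt.le]
    refine Finset.sum_congr rfl fun k _ => ?_
    rw [hpos]
    simp only [F]
    push_cast
    ring
  rw [htel]
  simp only [F]
  linear_combination -((q : ℝ) - p) * hcm

/-- With the alternating directions, the doubled signed area enclosed by the cycles is negative
when measured as the sum of trapezoids `(Δy)(x + x')`: on every horizontal line the directed
crossings alternate, starting with an upward one. -/
lemma area_neg [Nonempty E] :
    ∑ e, D.dir e * (((D.Y (D.hi e) : ℝ) - D.Y (D.lo e)) * (D.X (D.hi e) + D.X (D.lo e))) < 0 := by
  set K := ∑ e, D.Y (D.hi e) with hK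
  have hle : ∀ e, D.Y (D.hi e) ≤ K := fun e =>
    Finset.single_le_sum (f := fun e => D.Y (D.hi e)) (fun _ _ => Nat.zero_le _)
      (Finset.mem_univ e)
  have hsum : ∑ e, D.dir e * (((D.Y (D.hi e) : ℝ) - D.Y (D.lo e)) *
      (D.X (D.hi e) + D.X (D.lo e))) = 2 * ∑ k ∈ Finset.range K,
        ∑ e ∈ Finset.univ.filter (fun e => D.Spans e k),
          (-1 : ℝ) ^ ((Finset.univ.filter (fun e => D.Spans e k)).filter fun g =>
            D.pos g (k + 1 / 2) < D.pos e (k + 1 / 2)).card * D.pos e (k + 1 / 2) := by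
    simp_rw [fun e => D.trapezoid e (hle e), Finset.mul_sum, Finset.sum_filter]
    rw [Finset.sum_comm]
    refine Finset.sum_congr rfl fun k _ => ?_
    refine Finset.sum_congr rfl fun e _ => ?_
    split_ifs with h
    · rw [← D.dir_eq h, Finset.filter_filter, leftCount]
      ring
    · simp
  rw [hsum]
  have hslab := fun k : ℕ =>
    alternating_sum_neg (fun e => D.pos e (k + 1 / 2)) (D.even_card_spans k).choose
      (Finset.univ.filter (fun e => D.Spans e k))
      ((D.even_card_spans k).choose_spec.trans (two_mul _).symm) (by
        intro e he g hg h
        by_contra hne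
        simp only [Finset.coe_filter, Finset.mem_univ, true_and, Set.mem_ofPred_eq] at he hg
        exact D.pos_mid_ne hne he hg h)
  obtain ⟨e⟩ := ‹Nonempty E›
  have hneg := Finset.sum_lt_sum (s := Finset.range K) (fun k _ => (hslab k).1)
    ⟨D.Y (D.lo e), Finset.mem_range.2 ((D.lo_lt_hi e).trans_le (hle e)),
      (hslab _).2 ⟨e, by
        have := D.lo_lt_hi e
        simp only [Finset.mem_filter, Finset.mem_univ, true_and]
        exact ⟨le_rfl, by omega⟩⟩⟩
  simp only [Finset.sum_const_zero] at hneg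
  linarith

end CycleDrawing

/-! ### Switching between two matchings with a crossing-free union -/

/-- The doubled signed area between the segment from `a` to `b` and the vertical axis. -/
def trapez {α β : Type*} (X : α ⊕ β → ℝ) (Y : α ⊕ β → ℕ) (a : α) (b : β) : ℝ :=
  ((Y (.inr b) : ℝ) - Y (.inl a)) * (X (.inr b) + X (.inl a))

section Switch

variable {α β : Type*}
  (M : Bool → α ≃ β) (X : α ⊕ β → ℝ) (Y : α ⊕ β → ℕ)

/-- The edges of the symmetric difference of the matchings `M true` and `M false`; the edge
`(a, i)` joins `a` and `M i a`. -/
abbrev DiffEdge : Type _ := {a : α // M true a ≠ M false a} × Bool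

variable {M} in
/-- The second endpoint of an edge of the symmetric difference. -/
def DiffEdge.tgt (e : DiffEdge M) : β := M e.2 e.1

/-- The edge `e` runs upwards from its endpoint in `α` to its endpoint in `β`. -/
def IsUp (e : DiffEdge M) : Prop := Y (.inl e.1.1) < Y (.inr e.tgt)

/-- The lower endpoint of an edge of the symmetric difference. -/
noncomputable def diffLo (e : DiffEdge M) : α ⊕ β :=
  if IsUp M Y e then .inl e.1.1 else .inr e.tgt

/-- The upper endpoint of an edge of the symmetric difference. -/
noncomputable def diffHi (e : DiffEdge M) : α ⊕ β :=
  if IsUp M Y e then .inr e.tgt else .inl e.1.1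

lemma diff_inc_iff (e : DiffEdge M) (v : α ⊕ β) :
    (diffLo M Y e = v ∨ diffHi M Y e = v) ↔ (.inl e.1.1 = v ∨ .inr e.tgt = v) := by
  unfold diffLo diffHi
  split_ifs
  · rfl
  · exact or_comm

lemma DiffEdge.ne_iff {e g : DiffEdge M} : e ≠ g → e.1.1 ≠ g.1.1 ∨ e.tgt ≠ g.tgt := by
  rintro h
  by_contra! hcon
  obtain ⟨⟨a, ha⟩, i⟩ := e
  obtain ⟨⟨a', ha'⟩, j⟩ := g
  obtain ⟨h1, h2⟩ := hcon
  simp only at h1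
  subst h1
  simp only [DiffEdge.tgt] at h2
  cases i <;> cases j
  · exact h rfl
  · exact ha h2.symm
  · exact ha h2
  · exact h rfl

/-- Two distinct edges of the matchings meet only in a common endpoint. -/
def SegmentsDisjoint : Prop :=
  ∀ (i j : Bool) (a a' : α), (a ≠ a' ∨ M i a ≠ M j a') → ∀ s r : ℝ, 0 ≤ s → s ≤ 1 → 0 ≤ r →
    r ≤ 1 →
    X (.inl a) + s * (X (.inr (M i a)) - X (.inl a))
      = X (.inl a') + r * (X (.inr (M j a')) - X (.inl a')) →
    (Y (.inl a) : ℝ) + s * (Y (.inr (M i a)) - Y (.inl a))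
      = Y (.inl a') + r * (Y (.inr (M j a')) - Y (.inl a')) →
    (a = a' ∧ s = 0) ∨ (M i a = M j a' ∧ s = 1)

/-- The point of an edge at height `t`, parametrized from the endpoint in `α`. -/
lemma exists_param (hY : Function.Injective Y) (e : DiffEdge M) {t : ℝ}
    (h1 : (Y (diffLo M Y e) : ℝ) ≤ t) (h2 : t ≤ Y (diffHi M Y e)) :
    ∃ s : ℝ, 0 ≤ s ∧ s ≤ 1 ∧
      lineX (X (diffLo M Y e)) (Y (diffLo M Y e)) (X (diffHi M Y e)) (Y (diffHi M Y e)) t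
        = X (.inl e.1.1) + s * (X (.inr e.tgt) - X (.inl e.1.1)) ∧
      t = Y (.inl e.1.1) + s * (Y (.inr e.tgt) - Y (.inl e.1.1)) := by
  by_cases hup : IsUp M Y e
  · simp only [diffLo, diffHi, hup, if_true] at h1 h2 ⊢
    have hlt : (Y (.inl e.1.1) : ℝ) < Y (.inr e.tgt) := by exact_mod_cast hup
    have hd : 0 < (Y (.inr e.tgt) : ℝ) - Y (.inl e.1.1) := by linarith
    refine ⟨(t - Y (.inl e.1.1)) / (Y (.inr e.tgt) - Y (.inl e.1.1)), ?_, ?_, rfl, ?_⟩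
    · exact div_nonneg (by linarith) hd.le
    · rw [div_le_one hd]; linarith
    · field_simp
      ring
  · simp only [diffLo, diffHi, hup, if_false] at h1 h2 ⊢
    have hne : Y (.inr e.tgt) ≠ Y (.inl e.1.1) := fun h => by cases hY h
    have hlt : (Y (.inr e.tgt) : ℝ) < Y (.inl e.1.1) := by
      exact_mod_cast lt_of_le_of_ne (not_lt.1 hup) hne
    have hd : 0 < (Y (.inl e.1.1) : ℝ) - Y (.inr e.tgt) := by linarith
    refine ⟨(Y (.inl e.1.1) - t) / (Y (.inl e.1.1) - Y (.inr e.tgt)), ?_, ?_, ?_, ?_⟩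
    · exact div_nonneg (by linarith) hd.le
    · rw [div_le_one hd]; linarith
    · unfold lineX
      field_simp
      ring
    · field_simp
      ring

variable [Fintype α]

lemma diff_deg (v : α ⊕ β) :
    (Finset.univ.filter fun e => diffLo M Y e = v ∨ diffHi M Y e = v).card = 0 ∨
    (Finset.univ.filter fun e => diffLo M Y e = v ∨ diffHi M Y e = v).card = 2 := by
  simp only [diff_inc_iff]
  rcases v with a | b
  · by_cases h : M true a = M false a
    · left
      rw [Finset.card_eq_zero, Finset.filter_eq_empty_iff]
      rintro ⟨⟨a', ha'⟩, i⟩ -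
      simp only [Sum.inl.injEq, reduceCtorEq, or_false]
      rintro rfl
      exact ha' h
    · right
      rw [Finset.card_eq_two]
      refine ⟨(⟨a, h⟩, true), (⟨a, h⟩, false), by simp, ?_⟩
      ext ⟨⟨a', ha'⟩, i⟩
      simp only [Finset.mem_filter, Finset.mem_univ, true_and, Sum.inl.injEq, reduceCtorEq,
        or_false, Finset.mem_insert, Finset.mem_singleton, Prod.mk.injEq, Subtype.mk.injEq]
      cases i <;> simp
  · by_cases h : (M true).symm b = (M false).symm b
    · left
      rw [Finset.card_eq_zero, Finset.filter_eq_empty_iff]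
      rintro ⟨⟨a', ha'⟩, i⟩ -
      simp only [Sum.inr.injEq, reduceCtorEq, false_or, DiffEdge.tgt]
      rintro rfl
      cases i
      · rw [Equiv.symm_apply_apply, Equiv.symm_apply_eq] at h
        exact ha' h.symm
      · rw [Equiv.symm_apply_apply, eq_comm, Equiv.symm_apply_eq] at h
        exact ha' h
    · right
      have h1 : M true ((M true).symm b) ≠ M false ((M true).symm b) := by
        rw [Equiv.apply_symm_apply]
        intro h'
        exact h (by rw [Equiv.eq_symm_apply]; exact h'.symm)
      have h2 : M true ((M false).symm b) ≠ M false ((M false).symm b) := by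
        rw [Equiv.apply_symm_apply]
        intro h'
        exact h (by rw [Equiv.symm_apply_eq]; exact h'.symm)
      rw [Finset.card_eq_two]
      refine ⟨(⟨_, h1⟩, true), (⟨_, h2⟩, false), by simp, ?_⟩
      ext ⟨⟨a', ha'⟩, i⟩
      simp only [Finset.mem_filter, Finset.mem_univ, true_and, Sum.inr.injEq, reduceCtorEq,
        false_or, Finset.mem_insert, Finset.mem_singleton, Prod.mk.injEq, Subtype.mk.injEq,
        DiffEdge.tgt]
      cases i <;> simp [Equiv.eq_symm_apply]

variable [Fintype β]

/-- The symmetric difference of two matchings, drawn in the plane. -/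
noncomputable def diffDrawing (hpos : ∀ v, 0 < Y v) (hY : Function.Injective Y)
    (hseg : SegmentsDisjoint M X Y) : CycleDrawing (DiffEdge M) (α ⊕ β) where
  X := X
  Y := Y
  lo := diffLo M Y
  hi := diffHi M Y
  Y_pos := hpos
  Y_inj := hY
  lo_lt_hi := fun e => by
    unfold diffLo diffHi
    split_ifs with h
    · exact h
    · exact lt_of_le_of_ne (not_lt.1 h) fun h => by cases hY h
  deg := fun v => by convert diff_deg M Y v
  planar := by
    intro e g hne t e1 e2 g1 g2 heq
    obtain ⟨s, s0, s1, hs, hst⟩ := exists_param M X Y hY e e1 e2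
    obtain ⟨r, r0, r1, hr, hrt⟩ := exists_param M X Y hY g g1 g2
    rw [hs, hr] at heq
    simp only [diff_inc_iff]
    rcases hseg e.2 g.2 e.1.1 g.1.1 (DiffEdge.ne_iff M hne) s r s0 s1 r0 r1 heq
      (hst.symm.trans hrt) with ⟨h, rfl⟩ | ⟨h, rfl⟩
    · exact ⟨.inl e.1.1, Or.inl rfl, Or.inl (by rw [h]), by rw [hst]; ring⟩
    · exact ⟨.inr e.tgt, Or.inr rfl, Or.inr (congrArg _ h.symm), by rw [hst]; ring⟩

/-- If the union of two different matchings is drawn without crossings, its cycles can be switched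
so that the two resulting matchings `P` and `Q`, which together have the same edges as the given
ones, differ in their total trapezoid area. On each cycle of the symmetric difference the
directions `CycleDrawing.dir` follow one of the two traversals; `P` consists of the edges
directed from `α` to `β`, and `Q` of those directed from `β` to `α`. -/
lemma exists_switch (hne : M true ≠ M false) (hpos : ∀ v, 0 < Y v) (hY : Function.Injective Y)
    (hseg : SegmentsDisjoint M X Y) :
    ∃ P Q : α ≃ β, (∀ a, (P a = M true a ∧ Q a = M false a) ∨
        (P a = M false a ∧ Q a = M true a)) ∧
      ∑ a, (trapez X Y a (P a) - trapez X Y a (Q a)) < 0 := by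
  set D := diffDrawing M X Y hpos hY hseg with hD
  -- `τ e = 1` if `e` is directed from `α` to `β`, and `τ e = -1` otherwise
  let τ : DiffEdge M → ℝ := fun e => D.dir e * if IsUp M Y e then 1 else -1
  have hlo : ∀ e, D.lo e = if IsUp M Y e then .inl e.1.1 else .inr e.tgt := fun e => rfl
  have hhi : ∀ e, D.hi e = if IsUp M Y e then .inr e.tgt else .inl e.1.1 := fun e => rfl
  have hτa : ∀ e g : DiffEdge M, e ≠ g → e.1.1 = g.1.1 → τ e = -τ g := by
    intro e g heg h
    simp only [τ]
    by_cases he : IsUp M Y e <;> by_cases hg : IsUp M Y g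
    · have := D.dir_lo heg (by rw [hlo, hlo, if_pos he, if_pos hg, h])
      simp [he, hg, this]
    · have := D.dir_through (e := g) (f := e) (by rw [hhi, hlo, if_pos he, if_neg hg, h])
      simp [he, hg, this]
    · have := D.dir_through (e := e) (f := g) (by rw [hhi, hlo, if_pos hg, if_neg he, h])
      simp [he, hg, this]
    · have := D.dir_hi heg (by rw [hhi, hhi, if_neg he, if_neg hg, h])
      simp [he, hg, this]
  have hτb : ∀ e g : DiffEdge M, e ≠ g → e.tgt = g.tgt → τ e = -τ g := by
    intro e g heg h
    simp only [τ]
    by_cases he : IsUp M Y e <;> by_cases hg : IsUp M Y g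
    · have := D.dir_hi heg (by rw [hhi, hhi, if_pos he, if_pos hg, h])
      simp [he, hg, this]
    · have := D.dir_through (e := e) (f := g) (by rw [hhi, hlo, if_pos he, if_neg hg, h])
      simp [he, hg, this]
    · have := D.dir_through (e := g) (f := e) (by rw [hhi, hlo, if_pos hg, if_neg he, h])
      simp [he, hg, this]
    · have := D.dir_lo heg (by rw [hlo, hlo, if_neg he, if_neg hg, h])
      simp [he, hg, this]
  have hτ1 : ∀ e, τ e = 1 ∨ τ e = -1 := by
    intro e
    simp only [τ]
    rcases D.dir_eq_one_or e with h | h <;> rw [h] <;> split_ifs <;> norm_num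
  let S : α → Prop := fun a => ∀ h : M true a ≠ M false a, τ (⟨a, h⟩, true) = 1
  have hS : ∀ a a', M true a = M false a' → (S a ↔ S a') := by
    intro a a' h
    by_cases haa : a = a'
    · rw [haa]
    · have ha : M true a ≠ M false a := by
        rw [h]
        exact fun h' => haa ((M false).injective h').symm
      have ha' : M true a' ≠ M false a' := by
        rw [← h]
        exact fun h' => haa ((M true).injective h').symm
      have h1 := hτb (⟨a, ha⟩, true) (⟨a', ha'⟩, false) (by simp) h
      have h2 := hτa (⟨a', ha'⟩, true) (⟨a', ha'⟩, false) (by simp) rfl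
      have h3 : τ (⟨a, ha⟩, true) = τ (⟨a', ha'⟩, true) := h1.trans h2.symm
      exact ⟨fun hs _ => h3 ▸ hs ha, fun hs _ => h3.symm ▸ hs ha'⟩
  have hcard : Fintype.card α = Fintype.card β := Fintype.card_congr (M true)
  let P : α → β := fun a => if S a then M true a else M false a
  let Q : α → β := fun a => if S a then M false a else M true a
  have hP : Function.Injective P := by
    intro a a' h
    simp only [P] at h
    split_ifs at h with h1 h2 h2
    · exact (M true).injective h
    · exact absurd ((hS a a' h).1 h1) h2
    · exact absurd ((hS a' a h.symm).1 h2) h1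
    · exact (M false).injective h
  have hQ : Function.Injective Q := by
    intro a a' h
    simp only [Q] at h
    split_ifs at h with h1 h2 h2
    · exact (M false).injective h
    · exact absurd ((hS a' a h.symm).2 h1) h2
    · exact absurd ((hS a a' h).2 h2) h1
    · exact (M true).injective h
  refine ⟨Equiv.ofBijective P ((Fintype.bijective_iff_injective_and_card P).2 ⟨hP, hcard⟩),
    Equiv.ofBijective Q ((Fintype.bijective_iff_injective_and_card Q).2 ⟨hQ, hcard⟩), ?_, ?_⟩
  · intro a
    simp only [Equiv.ofBijective_apply, P, Q]
    split_ifs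
    · exact Or.inl ⟨rfl, rfl⟩
    · exact Or.inr ⟨rfl, rfl⟩
  · simp only [Equiv.ofBijective_apply]
    have hE : Nonempty (DiffEdge M) := by
      by_contra hcon
      apply hne
      ext1 a
      by_contra ha
      exact hcon ⟨(⟨a, ha⟩, true)⟩
    have harea := D.area_neg
    have h1 : ∀ e, D.dir e * (((D.Y (D.hi e) : ℝ) - D.Y (D.lo e)) *
        (D.X (D.hi e) + D.X (D.lo e))) = τ e * trapez X Y e.1.1 e.tgt := by
      intro e
      have hX : D.X = X := rfl
      have hY : D.Y = Y := rfl
      rw [hlo, hhi, hX, hY]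
      simp only [τ, trapez]
      split_ifs <;> ring
    have h2 : ∑ e, τ e * trapez X Y e.1.1 e.tgt
        = ∑ a, (trapez X Y a (P a) - trapez X Y a (Q a)) := by
      rw [Fintype.sum_prod_type]
      have h3 : ∀ a : {a : α // M true a ≠ M false a},
          ∑ i : Bool, τ (a, i) * trapez X Y a.1 (DiffEdge.tgt (a, i))
            = trapez X Y a.1 (P a.1) - trapez X Y a.1 (Q a.1) := by
        intro a
        rw [Fintype.sum_bool]
        have h4 := hτa (a, false) (a, true) (by simp) rfl
        have h5 : S a.1 ↔ τ (a, true) = 1 := ⟨fun h => h a.2, fun h _ => h⟩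
        rw [h4]
        simp only [P, Q, DiffEdge.tgt, h5]
        rcases hτ1 (a, true) with h | h <;> rw [h]
        · simp; ring
        · norm_num; ring
      simp only [h3]
      rw [← Finset.sum_subtype (Finset.univ.filter fun a => M true a ≠ M false a) (by simp)
        (fun a => trapez X Y a (P a) - trapez X Y a (Q a))]
      refine Finset.sum_filter_of_ne fun a _ h => ?_
      rintro h'
      apply h
      simp [P, Q, h']
    rw [← h2, ← Finset.sum_congr rfl fun e _ => h1 e]
    exact harea

end Switch

/-! ### Crossing edges of minimum-weight matchings -/

/-- The plane `ℝ²` with the Euclidean norm. -/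
local notation "E2" => EuclideanSpace ℝ (Fin 2)

/-- The doubled signed area of the parallelogram spanned by `u` and `v`. -/
def cross (u v : E2) : ℝ := u 0 * v 1 - u 1 * v 0

lemma norm_sq_E2 (u : E2) : ‖u‖ ^ 2 = u 0 ^ 2 + u 1 ^ 2 := by
  rw [EuclideanSpace.real_norm_sq_eq, Fin.sum_univ_two]

/-- A quantitative triangle inequality: the defect is at least proportional to the squared area of
the triangle. -/
lemma cross_sq_le (u v : E2) :
    cross u v ^ 2 ≤ (‖u‖ + ‖v‖ - ‖u - v‖) * (2 * (‖u‖ * ‖v‖) * (‖u‖ + ‖v‖)) := by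
  have hu := norm_sq_E2 u
  have hv := norm_sq_E2 v
  have huv := norm_sq_E2 (u - v)
  simp only [PiLp.sub_apply] at huv
  have htri : ‖u - v‖ ≤ ‖u‖ + ‖v‖ := norm_sub_le u v
  have a0 := norm_nonneg u
  have b0 := norm_nonneg v
  have g0 := norm_nonneg (u - v)
  set α := ‖u‖
  set β := ‖v‖
  set γ := ‖u - v‖
  set d := u 0 * v 0 + u 1 * v 1 with hd
  -- Lagrange's identity, and the law of cosines
  have h1 : cross u v ^ 2 = (α * β + d) * (α * β - d) := by
    have : (α * β + d) * (α * β - d) = α ^ 2 * β ^ 2 - d ^ 2 := by ring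
    rw [this, hu, hv, hd, cross]
    ring
  have h2 : (α + β - γ) * (α + β + γ) = 2 * (α * β + d) := by
    have : (α + β - γ) * (α + β + γ) = α ^ 2 + β ^ 2 + 2 * (α * β) - γ ^ 2 := by ring
    rw [this, hu, hv, huv, hd]
    ring
  have hp : 0 ≤ α * β + d := by
    have : 0 ≤ (α + β - γ) * (α + β + γ) := mul_nonneg (by linarith) (by linarith)
    linarith
  have hab : 0 ≤ α * β := mul_nonneg a0 b0
  calc cross u v ^ 2 = (α * β + d) * (α * β - d) := h1
    _ ≤ (α * β + d) * (2 * (α * β)) := mul_le_mul_of_nonneg_left (by linarith) hp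
    _ = (α + β - γ) * ((α + β + γ) * (α * β)) := by linear_combination (-(α * β)) * h2
    _ ≤ (α + β - γ) * (2 * (α * β) * (α + β)) := by
        refine mul_le_mul_of_nonneg_left ?_ (by linarith)
        nlinarith

lemma collinear_of_cross_eq_zero {P Q R : E2} (hPQ : P ≠ Q) (h : cross (Q - P) (R - P) = 0) :
    Collinear ℝ ({P, Q, R} : Set E2) := by
  rw [collinear_iff_of_mem (p₀ := P) (by simp)]
  refine ⟨Q - P, ?_⟩
  simp only [cross, PiLp.sub_apply] at h
  have hR : ∃ c : ℝ, R = c • (Q - P) +ᵥ P := by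
    by_cases h0 : Q 0 - P 0 = 0
    · have h1 : Q 1 - P 1 ≠ 0 := by
        intro h1
        apply hPQ
        ext i
        fin_cases i
        · simp; linarith
        · simp; linarith
      refine ⟨(R 1 - P 1) / (Q 1 - P 1), ?_⟩
      ext i
      fin_cases i
      · simp [h0] at h ⊢
        have := h.resolve_left h1
        linarith
      · simp
        field_simp
        ring
    · refine ⟨(R 0 - P 0) / (Q 0 - P 0), ?_⟩
      ext i
      fin_cases i
      · simp
        field_simp
        ring
      · simp
        field_simp
        linarith
  intro p hp
  simp only [Set.mem_insert_iff, Set.mem_singleton_iff] at hp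
  rcases hp with rfl | rfl | rfl
  · exact ⟨0, by simp⟩
  · exact ⟨1, by simp⟩
  · exact hR

lemma OnGrid.bounds {N : ℕ} {p : E2} (h : OnGrid N p) (i : Fin 2) : 0 ≤ p i ∧ p i ≤ (N : ℝ) := by
  obtain ⟨m, hm, he⟩ := h i
  rw [he]
  exact ⟨Nat.cast_nonneg m, Nat.cast_le.2 hm⟩

lemma OnGrid.norm_sub_sq_le {N : ℕ} {p q : E2} (hp : OnGrid N p) (hq : OnGrid N q) :
    ‖p - q‖ ^ 2 ≤ 2 * (N : ℝ) ^ 2 := by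
  rw [norm_sq_E2]
  simp only [PiLp.sub_apply]
  have := hp.bounds 0
  have := hp.bounds 1
  have := hq.bounds 0
  have := hq.bounds 1
  nlinarith

lemma OnGrid.cross_int {N : ℕ} {p q p' q' : E2} (hp : OnGrid N p) (hq : OnGrid N q)
    (hp' : OnGrid N p') (hq' : OnGrid N q') : ∃ z : ℤ, cross (q - p) (q' - p') = z := by
  obtain ⟨p0, -, e1⟩ := hp 0
  obtain ⟨p1, -, e2⟩ := hp 1
  obtain ⟨q0, -, e3⟩ := hq 0
  obtain ⟨q1, -, e4⟩ := hq 1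
  obtain ⟨r0, -, e5⟩ := hp' 0
  obtain ⟨r1, -, e6⟩ := hp' 1
  obtain ⟨s0, -, e7⟩ := hq' 0
  obtain ⟨s1, -, e8⟩ := hq' 1
  refine ⟨(q0 - p0) * (s1 - r1) - (q1 - p1) * (s0 - r0), ?_⟩
  simp only [cross, PiLp.sub_apply, e1, e2, e3, e4, e5, e6, e7, e8]
  push_cast
  ring

/-- The triangle-inequality defect at the crossing point, for the triangle with legs `s • x` and
`r • y` along the two crossing segments `x` and `y`. The products `s * cross x y` and
`r * cross x y` being nonzero integers bounds the area from below. -/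
lemma defect_ge {N : ℕ} (x y : E2) {s r : ℝ} (hs : 0 < s) (hs1 : s < 1)
    (hr : 0 < r) (hr1 : r < 1) (hx : ‖x‖ ^ 2 ≤ 2 * (N : ℝ) ^ 2)
    (hy : ‖y‖ ^ 2 ≤ 2 * (N : ℝ) ^ 2) (hD : cross x y ≠ 0)
    (z₁ z₂ : ℤ) (h1 : s * cross x y = z₁) (h2 : r * cross x y = z₂)
    {u v : E2} (hu : u = -(s • x)) (hv : v = r • y) :
    1 ≤ (s * ‖x‖ + r * ‖y‖ - ‖u - v‖) * (12 * (N : ℝ) ^ 3) := by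
  have hnu : ‖u‖ = s * ‖x‖ := by rw [hu, norm_neg, norm_smul, Real.norm_of_nonneg hs.le]
  have hnv : ‖v‖ = r * ‖y‖ := by rw [hv, norm_smul, Real.norm_of_nonneg hr.le]
  have hc : cross u v = -(s * r * cross x y) := by
    simp only [hu, hv, cross, PiLp.neg_apply, PiLp.smul_apply, smul_eq_mul]
    ring
  have key := cross_sq_le u v
  have htri := norm_sub_le u v
  rw [hnu, hnv] at key htri
  rw [hc] at key
  set f := s * ‖x‖ + r * ‖y‖ - ‖u - v‖ with hf
  have hf0 : 0 ≤ f := by linarith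
  set c := cross x y
  set d := ‖x‖
  set d' := ‖y‖
  have d0 : 0 ≤ d := norm_nonneg x
  have d0' : 0 ≤ d' := norm_nonneg y
  have hsr : 0 < s * r := mul_pos hs hr
  have hprod : 1 ≤ s * r * c ^ 2 := by
    have he : s * r * c ^ 2 = ((z₁ * z₂ : ℤ) : ℝ) := by
      push_cast
      rw [← h1, ← h2]
      ring
    have hpos : 0 < s * r * c ^ 2 := by positivity
    rw [he] at hpos ⊢
    have : 0 < z₁ * z₂ := by exact_mod_cast hpos
    exact_mod_cast this
  have hle : s * r * c ^ 2 ≤ f * (2 * (d * d') * (s * d + r * d')) := by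
    have : (s * r) * (s * r * c ^ 2) ≤ (s * r) * (f * (2 * (d * d') * (s * d + r * d'))) := by
      nlinarith
    exact le_of_mul_le_mul_left this hsr
  have hN : (0 : ℝ) ≤ N := Nat.cast_nonneg N
  have hdd : d * d' ≤ 2 * (N : ℝ) ^ 2 := by nlinarith [sq_nonneg (d - d')]
  have hd1 : d ≤ 3 / 2 * N := by
    refine le_of_sq_le_sq ?_ (by positivity)
    nlinarith
  have hd2 : d' ≤ 3 / 2 * N := by
    refine le_of_sq_le_sq ?_ (by positivity)
    nlinarith
  have hsum : s * d + r * d' ≤ 3 * N := by nlinarith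
  have hsum0 : 0 ≤ s * d + r * d' := by positivity
  have hfin : 2 * (d * d') * (s * d + r * d') ≤ 12 * (N : ℝ) ^ 3 := by
    calc 2 * (d * d') * (s * d + r * d') ≤ 2 * (2 * (N : ℝ) ^ 2) * (3 * N) := by gcongr
      _ = 12 * (N : ℝ) ^ 3 := by ring
  exact hprod.trans (hle.trans (mul_le_mul_of_nonneg_left hfin hf0))

/-- Uncrossing two crossing grid segments shortens them by at least `1 / (6 N³)`. -/
lemma crossing_gap {N : ℕ} {a b a' b' : E2} (ha : OnGrid N a) (hb : OnGrid N b)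
    (ha' : OnGrid N a') (hb' : OnGrid N b') {s r : ℝ} (hs : 0 < s) (hs1 : s < 1)
    (hr : 0 < r) (hr1 : r < 1) (heq : a + s • (b - a) = a' + r • (b' - a'))
    (hD : cross (b - a) (b' - a') ≠ 0) :
    1 ≤ (‖a - b‖ + ‖a' - b'‖ - ‖a - b'‖ - ‖a' - b‖) * (6 * (N : ℝ) ^ 3) := by
  have e0 := congrArg (fun p : E2 => p 0) heq
  have e1 := congrArg (fun p : E2 => p 1) heq
  simp only [PiLp.add_apply, PiLp.smul_apply, PiLp.sub_apply, smul_eq_mul] at e0 e1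
  obtain ⟨z, hz⟩ := OnGrid.cross_int ha hb ha' hb'
  obtain ⟨z₁, hz₁⟩ := OnGrid.cross_int ha ha' ha' hb'
  obtain ⟨z₂, hz₂⟩ := OnGrid.cross_int ha hb ha' ha
  have hs' : s * cross (b - a) (b' - a') = z₁ := by
    rw [← hz₁]
    simp only [cross, PiLp.sub_apply]
    linear_combination (b' 1 - a' 1) * e0 - (b' 0 - a' 0) * e1
  have hr' : r * cross (b - a) (b' - a') = z₂ := by
    rw [← hz₂]
    simp only [cross, PiLp.sub_apply]
    linear_combination (b 1 - a 1) * e0 - (b 0 - a 0) * e1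
  have hx := OnGrid.norm_sub_sq_le hb ha
  have hy := OnGrid.norm_sub_sq_le hb' ha'
  have k1 := defect_ge (b - a) (b' - a') hs hs1 (r := 1 - r) (by linarith) (by linarith) hx hy hD
    z₁ (z - z₂) hs' (by push_cast; linarith) rfl rfl
  have k2 := defect_ge (b' - a') (b - a) hr hr1 (s := r) (r := 1 - s) (by linarith) (by linarith)
    hy hx (by
      intro h
      apply hD
      simp only [cross] at h ⊢
      linarith) (-z₂) (-(z - z₁)) (by
      push_cast
      rw [← hr']
      simp only [cross]
      ring) (by
      push_cast
      rw [← hz, ← hs']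
      simp only [cross]
      ring) rfl rfl
  have v1 : -(s • (b - a)) - (1 - r) • (b' - a') = a - b' := by
    ext i
    have := congrArg (fun p : E2 => p i) heq
    simp only [PiLp.add_apply, PiLp.smul_apply, PiLp.sub_apply, PiLp.neg_apply,
      smul_eq_mul] at this ⊢
    linarith
  have v2 : -(r • (b' - a')) - (1 - s) • (b - a) = a' - b := by
    ext i
    have := congrArg (fun p : E2 => p i) heq
    simp only [PiLp.add_apply, PiLp.smul_apply, PiLp.sub_apply, PiLp.neg_apply,
      smul_eq_mul] at this ⊢
    linarith
  rw [v1] at k1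
  rw [v2] at k2
  rw [norm_sub_rev a b, norm_sub_rev a' b']
  linarith

/-- Edges to which the exchange inequality applies do not cross: uncrossing shortens them by so
much that the rounded lengths drop by at least one, which outweighs the change of the area
term. -/
lemma Wl_exchange_lt {N n l : ℕ} (hN : 0 < N) (hn : 2 ≤ n) (hl : 8 * n * N ^ 4 ≤ 2 ^ l)
    {a b a' b' : E2} (ha : OnGrid N a) (hb : OnGrid N b)
    (ha' : OnGrid N a') (hb' : OnGrid N b') {s r : ℝ} (hs : 0 < s) (hs1 : s < 1)
    (hr : 0 < r) (hr1 : r < 1) (heq : a + s • (b - a) = a' + r • (b' - a'))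
    (hD : cross (b - a) (b' - a') ≠ 0) :
    Wl n N l a b' + Wl n N l a' b < Wl n N l a b + Wl n N l a' b' := by
  have gap := crossing_gap ha hb ha' hb' hs hs1 hr hr1 heq hD
  have hl' : (8 * n * N ^ 4 : ℝ) ≤ 2 ^ l := by exact_mod_cast hl
  have hN' : (1 : ℝ) ≤ N := by exact_mod_cast hN
  have hn' : (2 : ℝ) ≤ n := by exact_mod_cast hn
  unfold Wl
  set L : ℝ := 2 ^ l
  set δ := ‖a - b‖ + ‖a' - b'‖ - ‖a - b'‖ - ‖a' - b‖ with hδ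
  have hδ0 : 0 < δ := by
    by_contra! h
    nlinarith [pow_pos (lt_of_lt_of_le one_pos hN') 3]
  have hbig : 2 < L * δ := by
    have h1 : 8 * n * (N : ℝ) ^ 4 * δ ≤ L * δ := mul_le_mul_of_nonneg_right hl' hδ0.le
    have h2 : (N : ℝ) * n * 8 ≤ 6 * (8 * n * (N : ℝ) ^ 4 * δ) := by
      have := mul_le_mul_of_nonneg_left gap (show (0 : ℝ) ≤ N * n * 8 by positivity)
      nlinarith
    have h3 : (2 : ℝ) ≤ N * n := by nlinarith
    linarith
  have f1 := Int.lt_floor_add_one (L * ‖a - b‖)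
  have f2 := Int.lt_floor_add_one (L * ‖a' - b'‖)
  have f3 := Int.floor_le (L * ‖a - b'‖)
  have f4 := Int.floor_le (L * ‖a' - b‖)
  set F1 := ⌊L * ‖a - b‖⌋
  set F2 := ⌊L * ‖a' - b'‖⌋
  set F3 := ⌊L * ‖a - b'‖⌋
  set F4 := ⌊L * ‖a' - b‖⌋
  have hF : 1 ≤ F1 + F2 - F3 - F4 := by
    have : (0 : ℝ) < ((F1 + F2 - F3 - F4 : ℤ) : ℝ) := by
      push_cast
      have : L * δ = L * ‖a - b‖ + L * ‖a' - b'‖ - L * ‖a - b'‖ - L * ‖a' - b‖ := by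
        rw [hδ]; ring
      linarith
    have : 0 < F1 + F2 - F3 - F4 := by exact_mod_cast this
    omega
  have hF' : (1 : ℝ) ≤ F1 + F2 - F3 - F4 := by exact_mod_cast hF
  have hK : (4 * (N : ℝ) ^ 2 + 1) ≤ 2 * n * (N : ℝ) ^ 2 + 1 := by nlinarith [sq_nonneg (N : ℝ)]
  have hKF : 4 * (N : ℝ) ^ 2 + 1 ≤ (2 * n * (N : ℝ) ^ 2 + 1) * (F1 + F2 - F3 - F4) := by
    have h0 : (0 : ℝ) ≤ 2 * n * (N : ℝ) ^ 2 + 1 := by positivity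
    nlinarith
  have bnd : ∀ p q p' q' : ℝ, (0 ≤ p ∧ p ≤ N) → (0 ≤ q ∧ q ≤ N) → (0 ≤ p' ∧ p' ≤ N) →
      (0 ≤ q' ∧ q' ≤ N) → |(p - q) * (p' - q')| ≤ (N : ℝ) ^ 2 := by
    intro p q p' q' hp hq hp' hq'
    rw [abs_mul, sq]
    refine mul_le_mul ?_ ?_ (abs_nonneg _) (by linarith)
    · rw [abs_le]; constructor <;> linarith
    · rw [abs_le]; constructor <;> linarith
  have t1 := (abs_le.1 (bnd _ _ _ _ (hb.bounds 1) (hb'.bounds 1) (ha.bounds 0) (ha'.bounds 0))).1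
  have t2 := (abs_le.1 (bnd _ _ _ _ (hb.bounds 0) (hb'.bounds 0) (ha.bounds 1) (ha'.bounds 1))).2
  nlinarith

/-! ### Minimum-weight matchings have a crossing-free union -/

/-- Two segments between four points, no three of them collinear, that meet do so in the interiors
of both segments and transversally. -/
lemma interior_of_meet {a b a' b' : E2} {s r : ℝ} (s0 : 0 ≤ s) (s1 : s ≤ 1) (r0 : 0 ≤ r)
    (r1 : r ≤ 1) (heq : a + s • (b - a) = a' + r • (b' - a'))
    (h1 : cross (b - a) (a' - a) ≠ 0) (h2 : cross (b - a) (b' - a) ≠ 0)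
    (h3 : cross (b' - a') (a - a') ≠ 0) (h4 : cross (b' - a') (b - a') ≠ 0) :
    (0 < s ∧ s < 1) ∧ (0 < r ∧ r < 1) ∧ cross (b - a) (b' - a') ≠ 0 := by
  have e0 := congrArg (fun p : E2 => p 0) heq
  have e1 := congrArg (fun p : E2 => p 1) heq
  simp only [PiLp.add_apply, PiLp.smul_apply, PiLp.sub_apply, smul_eq_mul] at e0 e1
  simp only [cross, PiLp.sub_apply, ne_eq] at *
  refine ⟨⟨lt_of_le_of_ne s0 ?_, lt_of_le_of_ne s1 ?_⟩,
    ⟨lt_of_le_of_ne r0 ?_, lt_of_le_of_ne r1 ?_⟩, fun h => h1 ?_⟩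
  · rintro rfl
    apply h3
    linear_combination (b' 0 - a' 0) * e1 - (b' 1 - a' 1) * e0
  · rintro rfl
    apply h4
    linear_combination (b' 0 - a' 0) * e1 - (b' 1 - a' 1) * e0
  · rintro rfl
    apply h1
    linear_combination (b 1 - a 1) * e0 - (b 0 - a 0) * e1
  · rintro rfl
    apply h2
    linear_combination (b 1 - a 1) * e0 - (b 0 - a 0) * e1
  · linear_combination (b 1 - a 1) * e0 - (b 0 - a 0) * e1 - r * h

section Grid

variable {A B : Finset E2}

/-- The points of `A` and of `B`, as one family. -/
def gridPt (v : {x // x ∈ A} ⊕ {y // y ∈ B}) : E2 := Sum.elim Subtype.val Subtype.val v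

lemma gridPt_mem (v : {x // x ∈ A} ⊕ {y // y ∈ B}) : gridPt v ∈ A ∪ B := by
  rcases v with a | b
  · exact Finset.mem_union_left _ a.2
  · exact Finset.mem_union_right _ b.2

lemma gridPt_injective (hAB : Disjoint A B) :
    Function.Injective (gridPt : {x // x ∈ A} ⊕ {y // y ∈ B} → E2) := by
  rintro (a | b) (a' | b') h <;> simp only [gridPt, Sum.elim_inl, Sum.elim_inr] at h
  · rw [Subtype.ext h]
  · exact absurd h (Finset.disjoint_iff_ne.1 hAB _ a.2 _ b'.2)
  · exact absurd h.symm (Finset.disjoint_iff_ne.1 hAB _ a'.2 _ b.2)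
  · rw [Subtype.ext h]

/-- A shear of the vertical coordinate which gives distinct positive integer heights to distinct
points of the grid. -/
lemma exists_height {N : ℕ} (hAB : Disjoint A B) (hgrid : ∀ p ∈ A ∪ B, OnGrid N p) :
    ∃ Y : {x // x ∈ A} ⊕ {y // y ∈ B} → ℕ, (∀ v, 0 < Y v) ∧ Function.Injective Y ∧
      ∀ v, (Y v : ℝ) = (N + 1) * gridPt v 1 + gridPt v 0 + 1 := by
  choose f hfN hf using fun v : {x // x ∈ A} ⊕ {y // y ∈ B} => hgrid _ (gridPt_mem v)
  refine ⟨fun v => (N + 1) * f v 1 + f v 0 + 1, fun v => Nat.succ_pos _, ?_, ?_⟩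
  · intro v w h
    have h' : f v 0 + (N + 1) * f v 1 = f w 0 + (N + 1) * f w 1 := by
      simp only at h
      omega
    have hv := Nat.lt_succ_of_le (hfN v 0)
    have hw := Nat.lt_succ_of_le (hfN w 0)
    have h0 : f v 0 = f w 0 := by
      have := congrArg (· % (N + 1)) h'
      simpa [Nat.add_mul_mod_self_left, Nat.mod_eq_of_lt hv, Nat.mod_eq_of_lt hw] using this
    have h1 : f v 1 = f w 1 := by
      rw [h0] at h'
      exact Nat.eq_of_mul_eq_mul_left (Nat.succ_pos N) (Nat.add_left_cancel h')
    apply gridPt_injective hAB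
    ext i
    fin_cases i
    · simp [hf, h0]
    · simp [hf, h1]
  · intro v
    push_cast
    rw [hf v 0, hf v 1]

/-- The segments of minimum-weight matchings are pairwise disjoint up to common endpoints: two
crossing edges would be transversal, so uncrossing them would violate the exchange inequality. -/
lemma segmentsDisjoint_of_minimal {N n l : ℕ} (hN : 0 < N) (hl : 8 * n * N ^ 4 ≤ 2 ^ l)
    (hAB : Disjoint A B) (hcardA : A.card = n) (hgrid : ∀ p ∈ A ∪ B, OnGrid N p)
    (hcol : ∀ P ∈ A ∪ B, ∀ Q ∈ A ∪ B, ∀ R ∈ A ∪ B, P ≠ Q → P ≠ R → Q ≠ R →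
      ¬ Collinear ℝ ({P, Q, R} : Set E2))
    (M : Bool → {x // x ∈ A} ≃ {y // y ∈ B})
    (hM : ∀ i (σ : {x // x ∈ A} ≃ {y // y ∈ B}),
      WlWeight n N l A B (M i) ≤ WlWeight n N l A B σ)
    (Y : {x // x ∈ A} ⊕ {y // y ∈ B} → ℕ)
    (hY : ∀ v, (Y v : ℝ) = (N + 1) * gridPt v 1 + gridPt v 0 + 1) :
    SegmentsDisjoint M (fun v => gridPt v 0) Y := by
  have hcross : ∀ P ∈ A ∪ B, ∀ Q ∈ A ∪ B, ∀ R ∈ A ∪ B, P ≠ Q → P ≠ R → Q ≠ R →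
      cross (Q - P) (R - P) ≠ 0 := fun P hP Q hQ R hR h1 h2 h3 h =>
    hcol P hP Q hQ R hR h1 h2 h3 (collinear_of_cross_eq_zero h1 h)
  intro i j a a' hne s r s0 s1 r0 r1 hX hYeq
  have memA : ∀ x : {x // x ∈ A}, (x : E2) ∈ A ∪ B := fun x => Finset.mem_union_left _ x.2
  have memB : ∀ x : {x // x ∈ B}, (x : E2) ∈ A ∪ B := fun x => Finset.mem_union_right _ x.2
  have hab : ∀ (x : {x // x ∈ A}) (y : {y // y ∈ B}), (x : E2) ≠ y := fun x y =>
    Finset.disjoint_iff_ne.1 hAB _ x.2 _ y.2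
  simp only [hY, gridPt, Sum.elim_inl, Sum.elim_inr] at hX hYeq
  set b := M i a with hb
  set b' := M j a' with hb'
  have e0 : (a : E2) 0 + s * ((b : E2) 0 - (a : E2) 0)
      = (a' : E2) 0 + r * ((b' : E2) 0 - (a' : E2) 0) := hX
  have e1 : (a : E2) 1 + s * ((b : E2) 1 - (a : E2) 1)
      = (a' : E2) 1 + r * ((b' : E2) 1 - (a' : E2) 1) := by
    have hN1 : (N : ℝ) + 1 ≠ 0 := by positivity
    apply mul_left_cancel₀ hN1
    linear_combination hYeq - hX
  by_cases haa : a = a'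
  · left
    refine ⟨haa, ?_⟩
    have hbb : b ≠ b' := hne.resolve_left (not_not.2 haa)
    have := hcross a (memA a) b (memB b) b' (memB b') (hab _ _) (hab _ _)
      (fun h => hbb (Subtype.ext h))
    rw [← haa] at e0 e1
    simp only [cross, PiLp.sub_apply] at this
    refine (mul_eq_zero.1 (?_ : s * _ = 0)).resolve_right this
    linear_combination ((b' : E2) 1 - (a : E2) 1) * e0 - ((b' : E2) 0 - (a : E2) 0) * e1
  by_cases hbb : b = b'
  · right
    refine ⟨hbb, ?_⟩
    have := hcross b (memB b) a (memA a) a' (memA a') (hab _ _).symm (hab _ _).symm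
      (fun h => haa (Subtype.ext h))
    rw [← hbb] at e0 e1
    simp only [cross, PiLp.sub_apply] at this
    have : 1 - s = 0 := by
      refine (mul_eq_zero.1 (?_ : (1 - s) * _ = 0)).resolve_right this
      linear_combination ((a' : E2) 1 - (b : E2) 1) * e0 - ((a' : E2) 0 - (b : E2) 0) * e1
    linarith
  exfalso
  have haa' : (a : E2) ≠ a' := fun h => haa (Subtype.ext h)
  have hbb' : (b : E2) ≠ b' := fun h => hbb (Subtype.ext h)
  have heq : (a : E2) + s • ((b : E2) - a) = a' + r • ((b' : E2) - a') := by
    ext k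
    fin_cases k
    · exact e0
    · exact e1
  obtain ⟨⟨s0', s1'⟩, ⟨r0', r1'⟩, hD⟩ := interior_of_meet s0 s1 r0 r1 heq
    (hcross a (memA a) b (memB b) a' (memA a') (hab _ _) haa' (hab _ _).symm)
    (hcross a (memA a) b (memB b) b' (memB b') (hab _ _) (hab _ _) hbb')
    (hcross a' (memA a') b' (memB b') a (memA a) (hab _ _) haa'.symm (hab _ _).symm)
    (hcross a' (memA a') b' (memB b') b (memB b) (hab _ _) (hab _ _) hbb'.symm)
  have hn : 2 ≤ n := by
    rw [← hcardA]
    exact Finset.one_lt_card.2 ⟨a, a.2, a', a'.2, haa'⟩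
  have hlt := Wl_exchange_lt hN hn hl (hgrid _ (memA a)) (hgrid _ (memB b)) (hgrid _ (memA a'))
    (hgrid _ (memB b')) s0' s1' r0' r1' heq hD
  have hle := exchange_le (fun (x : {x // x ∈ A}) (y : {y // y ∈ B}) => Wl n N l x y)
    (M i) (M j) (hM i) (hM j) haa
  exact absurd hlt (not_lt.2 hle)

/-! ### Uniqueness -/

lemma OnGrid.abs_cross_le {N : ℕ} {p q : E2} (hp : OnGrid N p) (hq : OnGrid N q) :
    |cross p q| ≤ (N : ℝ) ^ 2 := by
  have b1 := hp.bounds 0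
  have b2 := hp.bounds 1
  have b3 := hq.bounds 0
  have b4 := hq.bounds 1
  have h1 : 0 ≤ p 0 * q 1 := mul_nonneg b1.1 b4.1
  have h2 : 0 ≤ p 1 * q 0 := mul_nonneg b2.1 b3.1
  have h3 : p 0 * q 1 ≤ N * N := mul_le_mul b1.2 b4.2 b4.1 (Nat.cast_nonneg N)
  have h4 : p 1 * q 0 ≤ N * N := mul_le_mul b2.2 b3.2 b3.1 (Nat.cast_nonneg N)
  rw [cross, abs_le, sq]
  constructor <;> linarith

/-- Two minimum-weight matchings coincide. Switching the cycles of their symmetric difference gives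
two further minimum-weight matchings `P` and `Q`; comparing rounded lengths and area terms shows
that `P` and `Q` have the same area term, whereas a suitable switch separates the area terms. -/
lemma minimal_unique {N n l : ℕ} (hN : 0 < N) (hl : 8 * n * N ^ 4 ≤ 2 ^ l)
    (hAB : Disjoint A B) (hcardA : A.card = n) (hgrid : ∀ p ∈ A ∪ B, OnGrid N p)
    (hcol : ∀ P ∈ A ∪ B, ∀ Q ∈ A ∪ B, ∀ R ∈ A ∪ B, P ≠ Q → P ≠ R → Q ≠ R →
      ¬ Collinear ℝ ({P, Q, R} : Set E2))
    (M M' : {x // x ∈ A} ≃ {y // y ∈ B})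
    (hM : ∀ σ : {x // x ∈ A} ≃ {y // y ∈ B}, WlWeight n N l A B M ≤ WlWeight n N l A B σ)
    (hM' : ∀ σ : {x // x ∈ A} ≃ {y // y ∈ B},
      WlWeight n N l A B M' ≤ WlWeight n N l A B σ) :
    M = M' := by
  by_contra hne
  obtain ⟨Y, Ypos, Yinj, hY⟩ := exists_height hAB hgrid
  let MM : Bool → {x // x ∈ A} ≃ {y // y ∈ B} := fun i => if i then M else M'
  have hseg := segmentsDisjoint_of_minimal hN hl hAB hcardA hgrid hcol MM
    (fun i σ => by cases i <;> simp [MM, hM, hM']) Y hY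
  obtain ⟨P, Q, hPQ, hneg⟩ := exists_switch MM _ Y (by simpa [MM] using hne) Ypos Yinj hseg
  -- `P` and `Q` have the same edges as `M` and `M'` together, so both have minimum weight
  have hW : WlWeight n N l A B P = WlWeight n N l A B Q := by
    have h1 : WlWeight n N l A B P + WlWeight n N l A B Q
        = WlWeight n N l A B M + WlWeight n N l A B M' := by
      unfold WlWeight
      rw [← Finset.sum_add_distrib, ← Finset.sum_add_distrib]
      refine Finset.sum_congr rfl fun a _ => ?_
      rcases hPQ a with ⟨h, h'⟩ | ⟨h, h'⟩ <;> simp only [h, h', MM] <;> simp [add_comm]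
    have h2 := hM P
    have h3 := hM' Q
    have h4 := hM Q
    have h5 := hM' P
    linarith
  have hreind : ∀ h : E2 → ℝ, ∑ a : {x // x ∈ A}, (h (P a) - h (Q a)) = 0 := by
    intro h
    rw [Finset.sum_sub_distrib, Equiv.sum_comp P (fun b => h b), Equiv.sum_comp Q (fun b => h b),
      sub_self]
  -- up to boundary terms the area term is the cross product, of which both the weight and the
  -- trapezoid area in the sheared coordinates are affine functions
  set T : ℝ := ∑ a : {x // x ∈ A}, (cross (a : E2) (P a) - cross (a : E2) (Q a)) with hT
  set δ : ℤ := ∑ a : {x // x ∈ A}, (⌊(2 : ℝ) ^ l * ‖(a : E2) - P a‖⌋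
    - ⌊(2 : ℝ) ^ l * ‖(a : E2) - Q a‖⌋) with hδ
  have hKT : (2 * n * N ^ 2 + 1 : ℝ) * δ + T = 0 := by
    have h0 : ∑ a : {x // x ∈ A}, (Wl n N l a (P a) - Wl n N l a (Q a)) = 0 := by
      rw [Finset.sum_sub_distrib]
      exact sub_eq_zero.2 hW
    rw [← h0, hδ, hT]
    push_cast
    rw [Finset.mul_sum, ← Finset.sum_add_distrib, ← add_zero (∑ a : {x // x ∈ A}, _),
      ← hreind fun b => b 1 * b 0, ← Finset.sum_add_distrib]
    refine Finset.sum_congr rfl fun a _ => ?_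
    simp only [Wl, cross]
    ring
  have hTN : |T| ≤ 2 * n * (N : ℝ) ^ 2 := by
    calc |T| ≤ ∑ a : {x // x ∈ A}, |cross (a : E2) (P a) - cross (a : E2) (Q a)| :=
          Finset.abs_sum_le_sum_abs _ _
      _ ≤ ∑ _a : {x // x ∈ A}, 2 * (N : ℝ) ^ 2 := by
          refine Finset.sum_le_sum fun a _ => (abs_sub _ _).trans ?_
          have ha := hgrid _ (Finset.mem_union_left B a.2)
          have h1 := ha.abs_cross_le (hgrid _ (Finset.mem_union_right A (P a).2))
          have h2 := ha.abs_cross_le (hgrid _ (Finset.mem_union_right A (Q a).2))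
          linarith
      _ = 2 * n * (N : ℝ) ^ 2 := by
          simp [hcardA]
          ring
  -- the factor `2nN² + 1` exceeds every possible `|T|`, so the two parts vanish separately
  have hδ0 : δ = 0 := by
    by_contra h
    have h1 : (1 : ℝ) ≤ |(δ : ℝ)| := by exact_mod_cast Int.one_le_abs h
    have hK : (0 : ℝ) < 2 * n * N ^ 2 + 1 := by positivity
    have h2 : |T| = (2 * n * N ^ 2 + 1 : ℝ) * |(δ : ℝ)| := by
      rw [← abs_of_pos hK, ← abs_mul, ← abs_neg T]
      congr 1
      linarith
    nlinarith
  have hT0 : T = 0 := by simpa [hδ0] using hKT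
  refine hneg.ne ?_
  rw [← mul_zero ((N : ℝ) + 1), ← hT0, hT, Finset.mul_sum, ← sub_eq_zero,
    ← Finset.sum_sub_distrib, ← hreind fun b => (N + 1) * (b 1 * b 0) + b 0 ^ 2]
  refine Finset.sum_congr rfl fun a _ => ?_
  simp only [trapez, hY, gridPt, Sum.elim_inl, Sum.elim_inr, cross]
  ring

end Grid

/-- For disjoint `n`-point sets `A, B` on the grid `{0,…,N}²` with no three points of
`A ∪ B` collinear, and `2^ℓ ≥ 8nN⁴`: the minimum `W_ℓ`-weight over all perfect matchings is
attained by a unique perfect matching. -/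
theorem stmt_13 (N n l : ℕ) (hN : 0 < N) (hn : 0 < n)
    (hl : 8 * n * N ^ 4 ≤ 2 ^ l)
    (A B : Finset (EuclideanSpace ℝ (Fin 2)))
    (hAB : Disjoint A B) (hcardA : A.card = n) (hcardB : B.card = n)
    (hgrid : ∀ p ∈ A ∪ B, OnGrid N p)
    (hcol : ∀ P ∈ A ∪ B, ∀ Q ∈ A ∪ B, ∀ R ∈ A ∪ B, P ≠ Q → P ≠ R → Q ≠ R →
      ¬ Collinear ℝ ({P, Q, R} : Set (EuclideanSpace ℝ (Fin 2)))) :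
    ∃! M₀ : {x // x ∈ A} → {y // y ∈ B},
      Function.Bijective M₀ ∧
      ∀ M : {x // x ∈ A} → {y // y ∈ B}, Function.Bijective M →
        WlWeight n N l A B M₀ ≤ WlWeight n N l A B M := by
  have e : {x // x ∈ A} ≃ {y // y ∈ B} := Finset.equivOfCardEq (hcardA.trans hcardB.symm)
  have : Nonempty ({x // x ∈ A} ≃ {y // y ∈ B}) := ⟨e⟩
  obtain ⟨M₀, hM₀⟩ := Finite.exists_min
    fun σ : {x // x ∈ A} ≃ {y // y ∈ B} => WlWeight n N l A B σ
  refine ⟨M₀, ⟨M₀.bijective, fun M hM => hM₀ (Equiv.ofBijective M hM)⟩, ?_⟩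
  rintro M ⟨hMb, hM⟩
  have := minimal_unique hN hl hAB hcardA hgrid hcol (Equiv.ofBijective M hMb) M₀
    (fun σ => hM σ σ.bijective) hM₀
  rw [← this]
  rfl
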